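/- The set of pairs of integers (n,m) with n ≥ 2, m ≥ 2 and F_n - T_m = -5 is exactly {(3,5), (6,6), (12,10)}; that is, -5 = 2 - 7 = 8 - 13 = 144 - 149 are the only representations of -5 as a difference of a Fibonacci and a Tribonacci number with indices at least 2. -/

import Mathlib

/-- The Tribonacci sequence: T 0 = 0, T 1 = T 2 = 1,
    T (k+3) = T (k+2) + T (k+1) + T k. -/
def trib : ℕ → ℤ
  | 0 => 0
  | 1 => 1
  | 2 => 1
  | n + 3 => trib (n + 2) + trib (n + 1) + trib n

section PartA
open Polynomial

theorem zero_est (K L R S k : ℕ) (hL : L ≤ R) (hRk : R ≤ k)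
    (q : Fin L → ℝ[X]) (hq : ∃ j, q j ≠ 0) (hdeg : ∀ j, (q j).natDegree ≤ K)
    (w : ℝ) (hw : Function.Injective (fun j : ℕ => w ^ j)) (y : ℕ → ℝ) (hy : ∀ s, y s ≠ 0)
    (hv : ∀ r < R, ∀ s < S, ∑ j : Fin L, (q j).eval ((r : ℝ) + s * k) * (w ^ r * y s) ^ (j : ℕ) = 0) :
    (R - L + 1) * S ≤ L * K := by
  classical
  have hw0 : w ≠ 0 := by
    rintro rfl
    have := @hw 1 2 (by simp)
    omega
  by_contra hcon
  push Not at hcon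
  let J : Type := {j : Fin L // q j ≠ 0}
  let m := Fintype.card J
  have hm : m ≤ L := by
    have := Fintype.card_subtype_le (fun j : Fin L => q j ≠ 0)
    simpa only [Fintype.card_fin] using this
  let e : Fin m ≃ J := (Fintype.equivFin J).symm
  let jj : Fin m → ℕ := fun i => ((e i).1 : ℕ)
  have hjj : Function.Injective jj := by
    intro a b h
    apply e.injective
    apply Subtype.ext
    exact Fin.ext h
  have hm0 : 0 < m := by
    obtain ⟨j, hj⟩ := hq
    exact Fintype.card_pos_iff.2 ⟨⟨j, hj⟩⟩
  let Q : Fin m → ℝ[X] := fun i => q (e i).1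
  have hQ : ∀ i, Q i ≠ 0 := fun i => (e i).2
  let f : Fin m → Fin m → ℝ[X] := fun i ρ => C (w ^ (jj i * (ρ : ℕ))) * (Q i).comp (X + C ((ρ : ℕ) : ℝ))
  have hfd : ∀ i ρ, (f i ρ).natDegree = (Q i).natDegree := by
    intro i ρ
    simp only [f]
    rw [natDegree_C_mul (pow_ne_zero _ hw0), natDegree_comp, natDegree_X_add_C, mul_one]
  have hfl : ∀ i ρ, (f i ρ).leadingCoeff = (w ^ jj i) ^ (ρ : ℕ) * (Q i).leadingCoeff := by
    intro i ρ
    simp only [f]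
    rw [leadingCoeff_mul, leadingCoeff_C, leadingCoeff_comp (by rw [natDegree_X_add_C]; exact one_ne_zero), leadingCoeff_X_add_C, one_pow,
      mul_one, pow_mul]
  have hf0 : ∀ i ρ, f i ρ ≠ 0 := by
    intro i ρ h
    have := hfl i ρ
    rw [h, leadingCoeff_zero] at this
    have h2 : (w ^ jj i) ^ (ρ : ℕ) * (Q i).leadingCoeff ≠ 0 :=
      mul_ne_zero (pow_ne_zero _ (pow_ne_zero _ hw0)) (leadingCoeff_ne_zero.2 (hQ i))
    exact h2 this.symm
  let M : Matrix (Fin m) (Fin m) ℝ[X] := Matrix.of f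
  let d := ∑ i, (Q i).natDegree
  have hpd : ∀ σ : Equiv.Perm (Fin m), (∏ i, f (σ i) i).natDegree = d := by
    intro σ
    rw [natDegree_prod _ _ (fun i _ => hf0 _ _)]
    simp only [hfd]
    exact Equiv.sum_comp σ (fun i => (Q i).natDegree)
  have hMdeg : M.det.natDegree ≤ d := by
    rw [Matrix.det_apply]
    apply natDegree_sum_le_of_forall_le
    intro σ _
    refine (natDegree_smul_le _ _).trans ?_
    exact (hpd σ).le
  have hcoef : M.det.coeff d = (Matrix.of fun i ρ : Fin m => (Q i).leadingCoeff * Matrix.vandermonde (fun i => w ^ jj i) i ρ).det := by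
    rw [Matrix.det_apply, Matrix.det_apply, finsetSum_coeff]
    apply Finset.sum_congr rfl
    intro σ _
    rw [coeff_smul]
    congr 1
    have : (∏ i, M (σ i) i) = ∏ i, f (σ i) i := rfl
    rw [this, ← hpd σ, coeff_natDegree, leadingCoeff_prod]
    apply Finset.prod_congr rfl
    intro i _
    rw [hfl]
    simp [Matrix.vandermonde, mul_comm]
  have hdet0 : M.det ≠ 0 := by
    intro h
    rw [h, coeff_zero, Matrix.det_mul_column] at hcoef
    have h1 : (∏ i, (Q i).leadingCoeff) ≠ 0 := Finset.prod_ne_zero_iff.2 (fun i _ => leadingCoeff_ne_zero.2 (hQ i))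
    have h2 : (Matrix.vandermonde (fun i => w ^ jj i)).det ≠ 0 :=
      Matrix.det_vandermonde_ne_zero_iff.2 (hw.comp hjj)
    exact mul_ne_zero h1 h2 hcoef.symm
  let Z : Finset ℝ := (Finset.range (R - L + 1) ×ˢ Finset.range S).image
    (fun z : ℕ × ℕ => ((z.1 + z.2 * k : ℕ) : ℝ))
  have hZcard : Z.card = (R - L + 1) * S := by
    rw [Finset.card_image_of_injOn, Finset.card_product, Finset.card_range, Finset.card_range]
    rintro ⟨r, s⟩ h1 ⟨r', s'⟩ h2 h
    simp only [Finset.coe_product, Finset.coe_range, Set.mem_prod, Set.mem_Iio] at h1 h2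
    have h : r + s * k = r' + s' * k := by
      have h' : ((r + s * k : ℕ) : ℝ) = ((r' + s' * k : ℕ) : ℝ) := h
      exact_mod_cast h'
    have hL0 : 0 < L := lt_of_lt_of_le hm0 hm
    have hr : r < k := by omega
    have hr' : r' < k := by omega
    have e1 : r = r' := by
      have := congrArg (· % k) h
      simpa [Nat.add_mul_mod_self_right, Nat.mod_eq_of_lt hr, Nat.mod_eq_of_lt hr'] using this
    subst e1
    have : s * k = s' * k := by omega
    have := Nat.eq_of_mul_eq_mul_right (by omega) this
    simp [this]
  have hroot : ∀ z ∈ Z, M.det.eval z = 0 := by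
    intro z hz
    simp only [Z, Finset.mem_image, Finset.mem_product, Finset.mem_range, Prod.exists] at hz
    obtain ⟨r, s, ⟨hr, hs⟩, rfl⟩ := hz
    rw [← coe_evalRingHom, RingHom.map_det]
    rw [← Matrix.exists_vecMul_eq_zero_iff]
    refine ⟨fun i => (w ^ r * y s) ^ jj i, ?_, ?_⟩
    · intro h
      have := congrFun h ⟨0, hm0⟩
      simp only [Pi.zero_apply] at this
      exact pow_ne_zero _ (mul_ne_zero (pow_ne_zero _ hw0) (hy s)) this
    · ext ρ
      simp only [Matrix.vecMul, dotProduct, Pi.zero_apply, RingHom.mapMatrix_apply, Matrix.map_apply]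
      have hρ : r + (ρ : ℕ) < R := by have := ρ.2; omega
      have key := hv (r + ρ) hρ s hs
      rw [← key]
      have h3 : ∑ j : Fin L, (q j).eval (((r + (ρ : ℕ) : ℕ) : ℝ) + s * k) * (w ^ (r + (ρ : ℕ)) * y s) ^ (j : ℕ)
        = ∑ j : J, (q j.1).eval (((r + (ρ : ℕ) : ℕ) : ℝ) + s * k) * (w ^ (r + (ρ : ℕ)) * y s) ^ (j.1 : ℕ) := by
        rw [← Finset.sum_subtype (Finset.univ.filter (fun j => q j ≠ 0)) (by simp)
          (fun j : Fin L => (q j).eval (((r + (ρ : ℕ) : ℕ) : ℝ) + s * k) * (w ^ (r + (ρ : ℕ)) * y s) ^ (j : ℕ))]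
        symm
        apply Finset.sum_subset (Finset.filter_subset _ _)
        intro j _ hj
        simp only [Finset.mem_filter, Finset.mem_univ, true_and, not_not] at hj
        rw [hj, eval_zero, zero_mul]
      rw [h3, ← Equiv.sum_comp e]
      apply Finset.sum_congr rfl
      intro i _
      simp only [M, Matrix.of_apply, f, coe_evalRingHom, eval_mul, eval_C, eval_comp, eval_add, eval_X, Q, jj]
      rw [show (((r + s * k : ℕ) : ℝ) + ((ρ : ℕ) : ℝ)) = (((r + (ρ : ℕ) : ℕ) : ℝ) + s * k) by push_cast; ring]
      rw [pow_add]
      ring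
  have := Polynomial.eq_zero_of_natDegree_lt_card_of_eval_eq_zero' M.det Z hroot (by
    rw [hZcard]
    refine lt_of_le_of_lt (hMdeg.trans ?_) hcon
    calc d ≤ ∑ _i : Fin m, K := Finset.sum_le_sum (fun i _ => hdeg _)
      _ = m * K := by simp
      _ ≤ L * K := Nat.mul_le_mul_right _ hm)
  exact hdet0 this

end PartA

section PartB
open Polynomial

theorem pigeon {ι : Type} [Fintype ι] (T : ℕ) (c : ι → Fin T → ℝ) (B : ℕ) (M ε : ℝ) (hε : 0 < ε)
    (hM : ∀ i q, |c i q| ≤ M) (W : ℕ)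
    (hW : 2 * (Fintype.card ι * B * M) / ε < W)
    (hcard : W ^ T < (B + 1) ^ Fintype.card ι) :
    ∃ p : ι → ℤ, p ≠ 0 ∧ (∀ i, |p i| ≤ B) ∧ ∀ q, |∑ i, (p i : ℝ) * c i q| ≤ ε := by
  classical
  let Y : (ι → Fin (B + 1)) → Fin T → ℝ := fun p q => ∑ i, ((p i : ℕ) : ℝ) * c i q
  set N : ℝ := Fintype.card ι * B * M with hN
  have hY : ∀ p q, |Y p q| ≤ N := by
    intro p q
    refine (Finset.abs_sum_le_sum_abs _ _).trans ?_
    calc _ ≤ ∑ _i : ι, (B : ℝ) * M := by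
          apply Finset.sum_le_sum
          intro i _
          rw [abs_mul, Nat.abs_cast]
          have : ((p i : ℕ) : ℝ) ≤ B := by exact_mod_cast Nat.lt_succ_iff.1 (p i).2
          exact mul_le_mul this (hM i q) (abs_nonneg _) (by positivity)
      _ = N := by simp [hN]; ring
  have hb : ∀ p q, ⌊(Y p q + N) / ε⌋₊ < W := by
    intro p q
    rw [Nat.floor_lt (div_nonneg (by linarith [abs_le.1 (hY p q)]) hε.le)]
    refine lt_of_le_of_lt ?_ hW
    gcongr
    linarith [(abs_le.1 (hY p q)).2]
  obtain ⟨p, p', hne, heq⟩ := Fintype.exists_ne_map_eq_of_card_lt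
    (f := fun p : ι → Fin (B + 1) => (fun q => (⟨⌊(Y p q + N) / ε⌋₊, hb p q⟩ : Fin W) : Fin T → Fin W))
    (by simpa using hcard)
  refine ⟨fun i => ((p i : ℕ) : ℤ) - ((p' i : ℕ) : ℤ), ?_, ?_, ?_⟩
  · intro h
    apply hne
    ext i
    have := congrFun h i
    simp only [Pi.zero_apply] at this
    omega
  · intro i
    have := (p i).2
    have := (p' i).2
    change |((p i : ℕ) : ℤ) - ((p' i : ℕ) : ℤ)| ≤ B
    rw [abs_le]
    constructor <;> omega
  · intro q
    have h1 := congrFun heq q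
    simp only [Fin.mk.injEq] at h1
    have e1 : ∑ i, ((((p i : ℕ) : ℤ) - ((p' i : ℕ) : ℤ) : ℤ) : ℝ) * c i q = Y p q - Y p' q := by
      simp only [Y, ← Finset.sum_sub_distrib]
      apply Finset.sum_congr rfl
      intro i _
      push_cast
      ring
    rw [e1]
    have p1 : 0 ≤ (Y p q + N) / ε := div_nonneg (by linarith [abs_le.1 (hY p q)]) hε.le
    have p2 : 0 ≤ (Y p' q + N) / ε := div_nonneg (by linarith [abs_le.1 (hY p' q)]) hε.le
    have a1 := Nat.floor_le p1
    have a2 := Nat.lt_floor_add_one ((Y p q + N) / ε)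
    have b1 := Nat.floor_le p2
    have b2 := Nat.lt_floor_add_one ((Y p' q + N) / ε)
    rw [h1] at a1 a2
    have c1 : (Y p q + N) / ε - (Y p' q + N) / ε = (Y p q - Y p' q) / ε := by ring
    have : |(Y p q - Y p' q) / ε| ≤ 1 := by
      rw [← c1, abs_le]; constructor <;> linarith
    rwa [abs_div, abs_of_pos hε, div_le_one hε] at this

theorem liouville {K : Type*} [Field K] [NumberField K] (ι : K →ₐ[ℚ] ℝ)
    (hd : Module.finrank ℚ K ≤ 6) (z : K) (hz : IsIntegral ℤ z) (hz0 : z ≠ 0) (M : ℝ) (hM : 1 ≤ M)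
    (hσ : ∀ σ : K →ₐ[ℚ] ℂ, ‖σ z‖ ≤ M) : 1 ≤ |ι z| * M ^ 5 := by
  classical
  let σ0 : K →ₐ[ℚ] ℂ := (Complex.ofRealAm.restrictScalars ℚ).comp ι
  have h0 : ‖σ0 z‖ = |ι z| := by
    simp [σ0]
  have h1 := Algebra.norm_eq_prod_embeddings ℚ ℂ z
  have h2 : IsIntegral ℤ (Algebra.norm ℚ z) := Algebra.isIntegral_norm ℚ hz
  obtain ⟨n, hn⟩ := IsIntegrallyClosed.isIntegral_iff.1 h2
  have hn0 : n ≠ 0 := by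
    rintro rfl
    have := (Algebra.norm_ne_zero_iff (R := ℚ)).2 hz0
    apply this
    rw [← hn]; simp
  have h3 : (1 : ℝ) ≤ ∏ σ : K →ₐ[ℚ] ℂ, ‖σ z‖ := by
    rw [← norm_prod, ← h1, ← hn]
    simp only [eq_intCast, map_intCast, Complex.norm_intCast]
    exact_mod_cast Int.one_le_abs hn0
  rw [← Finset.mul_prod_erase _ _ (Finset.mem_univ σ0), h0] at h3
  refine h3.trans ?_
  gcongr
  calc ∏ σ ∈ Finset.univ.erase σ0, ‖σ z‖ ≤ ∏ σ ∈ Finset.univ.erase σ0, M :=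
        Finset.prod_le_prod (fun _ _ => norm_nonneg _) (fun σ _ => hσ σ)
    _ = M ^ (Fintype.card (K →ₐ[ℚ] ℂ) - 1) := by
        rw [Finset.prod_const, Finset.card_erase_of_mem (Finset.mem_univ _), Finset.card_univ]
    _ ≤ M ^ 5 := by
        apply pow_le_pow_right₀ hM
        rw [AlgHom.card]
        omega

def Maj (p P : ℝ[X]) : Prop := ∀ n, |p.coeff n| ≤ P.coeff n

theorem Maj.mul {p P q Q : ℝ[X]} (h : Maj p P) (h' : Maj q Q) : Maj (p * q) (P * Q) := by
  intro n
  rw [coeff_mul, coeff_mul]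
  refine (Finset.abs_sum_le_sum_abs _ _).trans (Finset.sum_le_sum fun x _ => ?_)
  rw [abs_mul]
  exact mul_le_mul (h _) (h' _) (abs_nonneg _) ((abs_nonneg _).trans (h _))

theorem Maj.one : Maj 1 1 := by
  intro n
  rw [coeff_one]
  split <;> simp

theorem Maj.prod (s : Finset ℕ) (f g : ℕ → ℝ[X]) (h : ∀ i, Maj (f i) (g i)) :
    Maj (∏ i ∈ s, f i) (∏ i ∈ s, g i) := by
  classical
  induction s using Finset.induction_on with
  | empty => simpa using Maj.one
  | insert a s ha ih => rw [Finset.prod_insert ha, Finset.prod_insert ha]; exact (h a).mul ih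

theorem Maj.sum (s : Finset ℕ) (f g : ℕ → ℝ[X]) (h : ∀ i, Maj (f i) (g i)) :
    Maj (∑ i ∈ s, f i) (∑ i ∈ s, g i) := by
  intro n
  rw [finsetSum_coeff, finsetSum_coeff]
  exact (Finset.abs_sum_le_sum_abs _ _).trans (Finset.sum_le_sum fun x _ => h x n)

theorem Maj.coeff_le {p P : ℝ[X]} (h : Maj p P) (ρ : ℝ) (hρ : 0 ≤ ρ) (n : ℕ) :
    |p.coeff n * ρ ^ n| ≤ P.eval ρ := by
  have hP : ∀ n, 0 ≤ P.coeff n := fun n => (abs_nonneg _).trans (h n)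
  rw [abs_mul, abs_of_nonneg (pow_nonneg hρ n)]
  refine (mul_le_mul_of_nonneg_right (h n) (pow_nonneg hρ n)).trans ?_
  by_cases hn : n ≤ P.natDegree
  · rw [eval_eq_sum_range]
    exact Finset.single_le_sum (f := fun i => P.coeff i * ρ ^ i)
      (fun i _ => mul_nonneg (hP i) (pow_nonneg hρ i)) (Finset.mem_range.2 (by omega))
  · rw [coeff_eq_zero_of_natDegree_lt (by omega), zero_mul, eval_eq_sum_range]
    exact Finset.sum_nonneg (fun i _ => mul_nonneg (hP i) (pow_nonneg hρ i))

/-- binomial polynomial -/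
noncomputable def chk (κ : ℝ) (i : ℕ) : ℝ[X] :=
  ∏ l ∈ Finset.range i, (C (κ / (l + 1)) * X - C ((l : ℝ) / (l + 1)))

noncomputable def chM (κ : ℝ) (i : ℕ) : ℝ[X] :=
  ∏ l ∈ Finset.range i, (C (κ / (l + 1)) * X + C ((l : ℝ) / (l + 1)))

theorem maj_chk (κ : ℝ) (hκ : 0 ≤ κ) (i : ℕ) : Maj (chk κ i) (chM κ i) := by
  apply Maj.prod
  intro l n
  rw [coeff_sub, coeff_add]
  refine (abs_sub _ _).trans ?_
  rw [coeff_C_mul, coeff_X, coeff_C]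
  apply add_le_add
  · split
    · rw [mul_one, abs_of_nonneg (by positivity)]
    · simp
  · split
    · rw [abs_of_nonneg (by positivity)]
    · simp

theorem chk_eval (κ t : ℝ) (i : ℕ) :
    (chk κ i).eval t = ∏ l ∈ Finset.range i, ((κ * t - l) / (l + 1)) := by
  rw [chk, eval_prod]
  apply Finset.prod_congr rfl
  intro l _
  simp
  ring

theorem chk_eval_nat (κ t : ℝ) (x i : ℕ) (h : κ * t = x) :
    (chk κ i).eval t = (x.choose i : ℝ) := by
  rw [chk_eval, h]
  induction i with
  | zero => simp
  | succ i ih =>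
    rw [Finset.prod_range_succ, ih]
    have := Nat.choose_succ_right_eq x i
    have h2 : ((x.choose (i+1) : ℕ) : ℝ) * ((i : ℝ) + 1) = (x.choose i : ℝ) * ((x : ℝ) - i) := by
      by_cases hix : i ≤ x
      · rw [← Nat.cast_sub hix]
        exact_mod_cast this
      · rw [Nat.choose_eq_zero_of_lt (by omega : x < i), Nat.choose_eq_zero_of_lt (by omega : x < i + 1)]
        simp
    field_simp
    linarith

theorem chk_natDegree_le (κ : ℝ) (i : ℕ) : (chk κ i).natDegree ≤ i := by
  rw [chk]
  refine (natDegree_prod_le _ _).trans ?_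
  calc _ ≤ ∑ _l ∈ Finset.range i, 1 := by
        apply Finset.sum_le_sum
        intro l _
        compute_degree
    _ = i := by simp

theorem chM_eval_le (k S K : ℕ) (hk : 1 ≤ k) (hS : 1 ≤ S) (hSK : S ≤ K) (i : ℕ) (hi : i < K) :
    (chM k i).eval (S : ℝ) ≤ (8 * k : ℝ) ^ K := by
  have hkS : (1 : ℝ) ≤ (k : ℝ) * S := by exact_mod_cast Nat.mul_pos hk hS
  have hk' : (1 : ℝ) ≤ k := by exact_mod_cast hk
  have e : ∀ i, (chM k i).eval (S : ℝ) = ∏ l ∈ Finset.range i, (((k : ℝ) * S + l) / (l + 1)) := by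
    intro i
    rw [chM, eval_prod]
    apply Finset.prod_congr rfl
    intro l _
    simp
    ring
  rw [e]
  calc ∏ l ∈ Finset.range i, (((k : ℝ) * S + l) / (l + 1))
      ≤ ∏ l ∈ Finset.range K, (((k : ℝ) * S + l) / (l + 1)) := by
        apply Finset.prod_le_prod_of_subset_of_one_le
        · intro x; simp; omega
        · intro l _; positivity
        · intro l _ _
          rw [le_div_iff₀ (by positivity)]
          linarith
    _ = (∏ l ∈ Finset.range K, ((k : ℝ) * S + l)) / (K.factorial : ℝ) := by
        rw [Finset.prod_div_distrib]
        congr 1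
        rw [← Finset.prod_range_add_one_eq_factorial]
        push_cast
        rfl
    _ ≤ (∏ l ∈ Finset.range K, (2 * k * K : ℝ)) / (K.factorial : ℝ) := by
        gcongr with l hl
        have h1 : (l : ℝ) ≤ K := by exact_mod_cast (Finset.mem_range.1 hl).le
        have h2 : (K : ℝ) ≤ k * K := by nlinarith [(Nat.cast_nonneg K : (0:ℝ) ≤ K)]
        have h3 : (k : ℝ) * S ≤ k * K := by gcongr
        linarith
    _ = (2 * k : ℝ) ^ K * ((K : ℝ) ^ K / (K.factorial : ℝ)) := by
        rw [Finset.prod_const, Finset.card_range, mul_pow _ (K : ℝ)]; ring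
    _ ≤ (2 * k : ℝ) ^ K * 4 ^ K := by
        gcongr
        refine (Real.pow_div_factorial_le_exp (K : ℝ) (by positivity) K).trans ?_
        rw [← Real.exp_one_pow]
        gcongr
        linarith [Real.exp_one_lt_d9]
    _ = _ := by rw [← mul_pow]; ring

noncomputable def exT (T : ℕ) (c : ℝ) : ℝ[X] := ∑ q ∈ Finset.range T, C (c ^ q / (q.factorial : ℝ)) * X ^ q

theorem exT_natDegree (T : ℕ) (hT : 0 < T) (c : ℝ) : (exT T c).natDegree ≤ T - 1 := by
  apply natDegree_sum_le_of_forall_le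
  intro q hq
  refine (natDegree_C_mul_X_pow_le _ _).trans ?_
  have := Finset.mem_range.1 hq
  omega

theorem maj_exT (T : ℕ) (c : ℝ) : Maj (exT T c) (exT T |c|) := by
  apply Maj.sum
  intro q n
  rw [coeff_C_mul, coeff_C_mul, coeff_X_pow]
  split <;> simp [abs_div, abs_pow]

theorem exT_eval (T : ℕ) (c t : ℝ) : (exT T c).eval t = ∑ q ∈ Finset.range T, (c * t) ^ q / (q.factorial : ℝ) := by
  rw [exT, eval_finsetSum]
  apply Finset.sum_congr rfl
  intro q _
  simp [mul_pow]
  ring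

theorem exT_eval_le (T : ℕ) (c t : ℝ) (h : 0 ≤ c * t) : (exT T c).eval t ≤ Real.exp (c * t) := by
  rw [exT_eval]
  exact Real.sum_le_exp_of_nonneg h T

theorem exp_tail (T : ℕ) (z : ℝ) :
    |Real.exp z - ∑ q ∈ Finset.range T, z ^ q / (q.factorial : ℝ)| ≤ Real.exp (2 * |z|) / 2 ^ T := by
  have h1 : HasSum (fun q : ℕ => z ^ q / (q.factorial : ℝ)) (Real.exp z) := by
    rw [Real.exp_eq_exp_ℝ]; exact NormedSpace.expSeries_div_hasSum_exp z
  have h2 : HasSum (fun q : ℕ => (2 * |z|) ^ q / (q.factorial : ℝ)) (Real.exp (2 * |z|)) := by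
    rw [Real.exp_eq_exp_ℝ]; exact NormedSpace.expSeries_div_hasSum_exp (2 * |z|)
  have h3 := (hasSum_nat_add_iff' T).2 h1
  have h4 := (hasSum_nat_add_iff' T).2 h2
  have h5 := h4.div_const (2 ^ T)
  have h6 : ∀ n, ‖z ^ (n + T) / ((n + T).factorial : ℝ)‖ ≤ (2 * |z|) ^ (n + T) / ((n + T).factorial : ℝ) / 2 ^ T := by
    intro n
    rw [norm_div, norm_pow, Real.norm_eq_abs, Real.norm_natCast, mul_pow, pow_add 2 n T]
    have : (1 : ℝ) ≤ 2 ^ n := one_le_pow₀ (by norm_num)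
    have h7 : 0 ≤ |z| ^ (n + T) / ((n + T).factorial : ℝ) := by positivity
    calc _ ≤ 2 ^ n * (|z| ^ (n + T) / ((n + T).factorial : ℝ)) := by nlinarith
      _ = _ := by field_simp
  have h7 := HasSum.norm_le_of_bounded h3 h5 h6
  rw [Real.norm_eq_abs] at h7
  refine h7.trans ?_
  gcongr
  have : 0 ≤ ∑ q ∈ Finset.range T, (2 * |z|) ^ q / (q.factorial : ℝ) := Finset.sum_nonneg (fun _ _ => by positivity)
  linarith

end PartB

section PartC
open Polynomial

theorem one_add_pow_sub_one (η : ℝ) (h : |η| ≤ 1) (n : ℕ) : |(1 + η) ^ n - 1| ≤ 2 ^ n * |η| := by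
  suffices hh : |(1 + η) ^ n - 1| ≤ (2 ^ n - 1) * |η| by
    nlinarith [abs_nonneg η]
  induction n with
  | zero => simp
  | succ n ih =>
    have h1 : |1 + η| ≤ 2 := (abs_add_le _ _).trans (by rw [abs_one]; linarith)
    have e : (1 + η) ^ (n + 1) - 1 = (1 + η) * ((1 + η) ^ n - 1) + η := by ring
    rw [e]
    refine (abs_add_le _ _).trans ?_
    rw [abs_mul]
    have := mul_le_mul h1 ih (abs_nonneg _) (by norm_num)
    rw [pow_succ]
    linarith

theorem exp25 (n : ℕ) : Real.exp (25 * n) ≤ 2 ^ (37 * n) := by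
  rw [mul_comm, Real.exp_nat_mul, pow_mul]
  gcongr
  have : Real.exp 25 = Real.exp 1 ^ 25 := by rw [← Real.exp_nat_mul]; norm_num
  rw [this]
  calc Real.exp 1 ^ 25 ≤ (2.7182818286 : ℝ) ^ 25 := by
        gcongr; exact Real.exp_one_lt_d9.le
    _ ≤ 2 ^ 37 := by norm_num

theorem sum_bound {ι : Type} [Fintype ι] (p c : ι → ℝ) (B M : ℝ) (hp : ∀ i, |p i| ≤ B) (hc : ∀ i, |c i| ≤ M) :
    |∑ i, p i * c i| ≤ Fintype.card ι * (B * M) := by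
  refine (Finset.abs_sum_le_sum_abs _ _).trans ?_
  calc _ ≤ ∑ _i : ι, B * M := by
        apply Finset.sum_le_sum
        intro i _
        rw [abs_mul]
        exact mul_le_mul (hp i) (hc i) (abs_nonneg _) ((abs_nonneg _).trans (hp i))
    _ = _ := by simp

theorem coreAbs {F : Type*} [Field F] [NumberField F] (ι : F →ₐ[ℚ] ℝ)
    (hd : Module.finrank ℚ F ≤ 6) (x g : F) (hx : IsIntegral ℤ x) (hg : IsIntegral ℤ g)
    (A K L R S T' k b n c μ E ω : ℕ)
    (hxσ : ∀ σ : F →ₐ[ℚ] ℂ, ‖σ x‖ ≤ 2 ^ A) (hgσ : ∀ σ : F →ₐ[ℚ] ℂ, ‖σ g‖ ≤ 2 ^ 34)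
    (hn : K * L ≤ 2 ^ n) (hn' : K + T' ≤ 2 ^ n) (hc : (8 * k : ℝ) ^ K ≤ 2 ^ c)
    (hμ : μ = n + b + c + A * R * L + 34 * (S * L))
    (hE : E = 3 * (S * L) + 5 * μ + 2)
    (hω : ω = 2 + 2 * n + b + c + 37 * (S * L) + E)
    (hiv : ω * (K + T') ≤ b * (K * L))
    (hii : E + n + b + c + 74 * (S * L) ≤ T')
    (hv : L * K < (R - L + 1) * S)
    (hLR : L ≤ R) (hRk : R ≤ k) (hSK : S ≤ K) (hk : 1 ≤ k) (hS : 1 ≤ S)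
    (u η : ℝ) (hu : u ≠ 0) (hxu : ι x = Real.exp u) (hku : |k * u| ≤ 25)
    (hgη : ι g = 5 * (Real.exp (k * u) * (1 + η)))
    (hη : |η| * 2 ^ (E + n + b + c + 38 * (S * L)) ≤ 1) : False := by
  classical
  have hT' : 0 < T' := by omega
  have hKpos : 0 < K := by omega
  have hLpos : 0 < L := by
    rcases Nat.eq_zero_or_pos L with h | h
    · subst h
      have : 0 < ω * (K + T') := Nat.mul_pos (by omega) (by omega)
      simp at hiv; omega
    · exact h
  set v : ℝ := k * u with hvdef
  have hkR : (0 : ℝ) < k := by exact_mod_cast hk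
  have hSR : (0 : ℝ) < S := by exact_mod_cast hS
  have hη4 : |η| ≤ 1 / 4 := by
    have : (4 : ℝ) ≤ 2 ^ (E + n + b + c + 38 * (S * L)) := by
      calc (4 : ℝ) = 2 ^ 2 := by norm_num
        _ ≤ _ := pow_le_pow_right₀ (by norm_num) (by omega)
    nlinarith [abs_nonneg η]
  -- exponent bound
  have hexpj : ∀ j : Fin L, ∀ t : ℝ, 0 ≤ t → t ≤ S → |((j : ℕ) : ℝ) * v| * t ≤ 25 * ((S * L : ℕ) : ℝ) := by
    intro j t ht0 ht
    rw [abs_mul, Nat.abs_cast]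
    have hj : ((j : ℕ) : ℝ) ≤ L := by exact_mod_cast j.2.le
    push_cast
    calc ((j : ℕ) : ℝ) * |v| * t ≤ L * 25 * S := by gcongr
      _ = _ := by ring
  have hexp2 : ∀ j : Fin L, ∀ t : ℝ, 0 ≤ t → t ≤ S →
      Real.exp (((j : ℕ) : ℝ) * v * t) ≤ 2 ^ (37 * (S * L)) := by
    intro j t ht0 ht
    refine le_trans (Real.exp_le_exp.2 ?_) (exp25 _)
    refine le_trans ?_ (hexpj j t ht0 ht)
    exact mul_le_mul_of_nonneg_right (le_abs_self _) ht0
  -- auxiliary polynomials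
  let G : Fin K × Fin L → ℝ[X] := fun z => chk k z.1 * exT T' (((z.2 : ℕ) : ℝ) * v)
  have hGdeg : ∀ z, (G z).natDegree < K + T' := by
    intro z
    have h1 := chk_natDegree_le k z.1
    have h2 := exT_natDegree T' hT' (((z.2 : ℕ) : ℝ) * v)
    have h3 : (G z).natDegree ≤ _ := natDegree_mul_le
    have := z.1.2
    omega
  have hchM : ∀ i : Fin K, (chM k i).eval (S : ℝ) ≤ 2 ^ c := fun i =>
    (chM_eval_le k S K hk hS hSK i i.2).trans hc
  have hchM0 : ∀ i : ℕ, 0 ≤ (chM k i).eval (S : ℝ) := fun i =>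
    (abs_nonneg _).trans ((maj_chk k hkR.le i).coeff_le S hSR.le 0)
  have hGc : ∀ z, ∀ q : Fin (K + T'), |(G z).coeff q * (S : ℝ) ^ (q : ℕ)| ≤ 2 ^ c * 2 ^ (37 * (S * L)) := by
    intro z q
    refine (((maj_chk k hkR.le z.1).mul (maj_exT T' (((z.2 : ℕ) : ℝ) * v))).coeff_le S hSR.le q).trans ?_
    rw [eval_mul]
    have h1 : (exT T' |((z.2 : ℕ) : ℝ) * v|).eval (S : ℝ) ≤ 2 ^ (37 * (S * L)) := by
      refine (exT_eval_le _ _ _ (by positivity)).trans ?_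
      exact (Real.exp_le_exp.2 (hexpj z.2 S hSR.le le_rfl)).trans (exp25 _)
    refine (mul_le_mul_of_nonneg_left h1 (hchM0 _)).trans ?_
    exact mul_le_mul_of_nonneg_right (hchM z.1) (by positivity)
  have hcard : Fintype.card (Fin K × Fin L) = K * L := by simp
  have hnR : ((K * L : ℕ) : ℝ) ≤ 2 ^ n := by exact_mod_cast hn
  obtain ⟨p, hp0, hpB, hpε⟩ := pigeon (ι := Fin K × Fin L) (K + T')
    (fun z q => (G z).coeff q * (S : ℝ) ^ (q : ℕ)) (2 ^ b) (2 ^ c * 2 ^ (37 * (S * L)))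
    ((1 / 2) ^ (E + n)) (by positivity) hGc (2 ^ ω)
    (by
      rw [hcard, div_lt_iff₀ (by positivity)]
      have e1 : ((2 ^ ω : ℕ) : ℝ) * (1 / 2) ^ (E + n) = 2 * (2 * (2 ^ n * 2 ^ b * (2 ^ c * 2 ^ (37 * (S * L))))) := by
        have : ω = 2 + n + b + c + 37 * (S * L) + (E + n) := by omega
        rw [this]
        push_cast
        rw [pow_add _ _ (E + n), mul_assoc, ← mul_pow]
        norm_num
        rw [pow_add, pow_add, pow_add, pow_add]
        ring
      rw [e1]
      have h2 : ((K * L : ℕ) : ℝ) * ((2 ^ b : ℕ) : ℝ) * (2 ^ c * 2 ^ (37 * (S * L))) ≤ 2 ^ n * 2 ^ b * (2 ^ c * 2 ^ (37 * (S * L))) := by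
        push_cast
        push_cast at hnR
        gcongr
      have h3 : (0 : ℝ) < 2 ^ n * 2 ^ b * (2 ^ c * 2 ^ (37 * (S * L))) := by positivity
      linarith)
    (by
      rw [hcard, ← pow_mul]
      calc 2 ^ (ω * (K + T')) ≤ 2 ^ (b * (K * L)) := Nat.pow_le_pow_right (by norm_num) hiv
        _ = (2 ^ b) ^ (K * L) := by rw [pow_mul]
        _ < (2 ^ b + 1) ^ (K * L) := Nat.pow_lt_pow_left (by omega) (by positivity))
  have hpR : ∀ z, |(p z : ℝ)| ≤ 2 ^ b := by
    intro z
    have := hpB z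
    exact_mod_cast this
  -- values at points
  have hmain : ∀ r < R, ∀ s < S, ∑ z : Fin K × Fin L, (p z : ℝ) * (((r + s * k).choose z.1 : ℝ) *
      (Real.exp u ^ r * (Real.exp v * (1 + η)) ^ s) ^ (z.2 : ℕ)) = 0 := by
    intro r hr s hs
    set P : ℝ := ∑ z : Fin K × Fin L, (p z : ℝ) * (((r + s * k).choose z.1 : ℝ) *
      (Real.exp u ^ r * (Real.exp v * (1 + η)) ^ s) ^ (z.2 : ℕ)) with hP
    set t : ℝ := s + r / k with ht
    have ht0 : 0 ≤ t := by positivity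
    have htS : t ≤ S := by
      have h1 : (r : ℝ) / k ≤ 1 := by
        rw [div_le_one hkR]; exact_mod_cast (by omega : r ≤ k)
      have h2 : (s : ℝ) + 1 ≤ S := by exact_mod_cast hs
      linarith
    have hkt : (k : ℝ) * t = ((r + s * k : ℕ) : ℝ) := by
      rw [ht]; push_cast; field_simp; ring
    have hchoose : ∀ i : Fin K, (((r + s * k).choose i : ℕ) : ℝ) ≤ 2 ^ c := by
      intro i
      refine le_trans ?_ (hchM i)
      rw [← chk_eval_nat k t _ _ hkt, chk_eval, chM, eval_prod]
      have hx : ∀ l : ℕ, eval (S : ℝ) (C ((k : ℝ) / (l + 1)) * X + C ((l : ℝ) / (l + 1))) = ((k : ℝ) * S + l) / (l + 1) := by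
        intro l; simp; ring
      simp only [hx]
      refine (le_abs_self _).trans ?_
      rw [Finset.abs_prod]
      apply Finset.prod_le_prod (fun _ _ => abs_nonneg _)
      intro l _
      rw [abs_div, abs_of_pos (by positivity : (0 : ℝ) < (l : ℝ) + 1)]
      gcongr
      refine (abs_sub _ _).trans ?_
      rw [abs_of_nonneg (by positivity), Nat.abs_cast]
      gcongr
    have hchoose0 : ∀ i : Fin K, (0 : ℝ) ≤ (((r + s * k).choose i : ℕ) : ℝ) := fun i => Nat.cast_nonneg _
    have hy : ∀ j : ℕ, (Real.exp u ^ r * (Real.exp v * (1 + η)) ^ s) ^ j = Real.exp (j * v * t) * (1 + η) ^ (s * j) := by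
      intro j
      rw [mul_pow _ (1 + η), ← mul_assoc, mul_pow, ← pow_mul (1 + η)]
      congr 1
      rw [← Real.exp_nat_mul, ← Real.exp_nat_mul, ← Real.exp_add, ← Real.exp_nat_mul]
      congr 1
      rw [hvdef, ht]
      field_simp
      ring
    -- analytic smallness
    have hsmall : |P| ≤ 3 * (1 / 2) ^ E := by
      have hdec : P = ∑ z, (p z : ℝ) * (G z).eval t
          + ∑ z : Fin K × Fin L, (p z : ℝ) * (((r + s * k).choose z.1 : ℝ) * (Real.exp ((z.2 : ℕ) * v * t) - (exT T' (((z.2 : ℕ) : ℝ) * v)).eval t))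
          + ∑ z : Fin K × Fin L, (p z : ℝ) * (((r + s * k).choose z.1 : ℝ) * (Real.exp ((z.2 : ℕ) * v * t) * ((1 + η) ^ (s * (z.2 : ℕ)) - 1))) := by
        rw [hP, ← Finset.sum_add_distrib, ← Finset.sum_add_distrib]
        apply Finset.sum_congr rfl
        intro z _
        simp only [G]
        rw [hy, eval_mul, chk_eval_nat k t _ _ hkt]
        ring
      have b1 : |∑ z, (p z : ℝ) * (G z).eval t| ≤ (1 / 2) ^ E := by
        have e1 : ∑ z, (p z : ℝ) * (G z).eval t = ∑ q : Fin (K + T'), (t / S) ^ (q : ℕ) * ∑ z, (p z : ℝ) * ((G z).coeff q * (S : ℝ) ^ (q : ℕ)) := by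
          simp only [Finset.mul_sum]
          rw [Finset.sum_comm]
          apply Finset.sum_congr rfl
          intro z _
          rw [eval_eq_sum_range' (hGdeg z), Finset.mul_sum, Finset.sum_range]
          apply Finset.sum_congr rfl
          intro q _
          rw [div_pow]
          field_simp
        rw [e1]
        refine (sum_bound _ _ 1 _ ?_ hpε).trans ?_
        · intro q
          rw [abs_of_nonneg (by positivity)]
          exact pow_le_one₀ (by positivity) (by rw [div_le_one hSR]; exact htS)
        · rw [Fintype.card_fin, one_mul, pow_add]
          have h1 : ((K + T' : ℕ) : ℝ) ≤ 2 ^ n := by exact_mod_cast hn'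
          calc _ ≤ 2 ^ n * ((1 / 2 : ℝ) ^ E * (1 / 2) ^ n) := by gcongr
            _ = (2 * (1 / 2) : ℝ) ^ n * (1 / 2) ^ E := by rw [mul_pow]; ring
            _ = _ := by norm_num
      have b2 : |∑ z : Fin K × Fin L, (p z : ℝ) * (((r + s * k).choose z.1 : ℝ) * (Real.exp ((z.2 : ℕ) * v * t) - (exT T' (((z.2 : ℕ) : ℝ) * v)).eval t))| ≤ (1 / 2) ^ E := by
        refine (sum_bound _ _ (2 ^ b) (2 ^ c * (2 ^ (74 * (S * L)) / 2 ^ T')) hpR ?_).trans ?_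
        · intro z
          rw [abs_mul, abs_of_nonneg (hchoose0 _)]
          refine mul_le_mul (hchoose z.1) ?_ (abs_nonneg _) (by positivity)
          rw [exT_eval]
          refine (exp_tail _ _).trans ?_
          gcongr
          calc Real.exp (2 * |((z.2 : ℕ) : ℝ) * v * t|) = Real.exp |((z.2 : ℕ) : ℝ) * v * t| ^ 2 := by
                rw [← Real.exp_nat_mul]; norm_num
            _ ≤ (2 ^ (37 * (S * L))) ^ 2 := by
                gcongr
                refine le_trans (Real.exp_le_exp.2 ?_) (exp25 _)
                rw [abs_mul, abs_of_nonneg ht0]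
                exact hexpj z.2 t ht0 htS
            _ = 2 ^ (74 * (S * L)) := by rw [← pow_mul]; congr 1; ring
        · rw [hcard]
          calc _ ≤ 2 ^ n * (2 ^ b * (2 ^ c * (2 ^ (74 * (S * L)) / (2 : ℝ) ^ T'))) := by gcongr
            _ = 2 ^ (n + b + c + 74 * (S * L)) / 2 ^ T' := by simp only [pow_add]; ring
            _ ≤ (1 / 2) ^ E := by
              rw [div_le_iff₀ (by positivity), one_div, inv_pow, inv_mul_eq_div, le_div_iff₀ (by positivity), ← pow_add]
              exact pow_le_pow_right₀ (by norm_num) (by omega)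
      have b3 : |∑ z : Fin K × Fin L, (p z : ℝ) * (((r + s * k).choose z.1 : ℝ) * (Real.exp ((z.2 : ℕ) * v * t) * ((1 + η) ^ (s * (z.2 : ℕ)) - 1)))| ≤ (1 / 2) ^ E := by
        refine (sum_bound _ _ (2 ^ b) (2 ^ c * (2 ^ (37 * (S * L)) * (2 ^ (S * L) * |η|))) hpR ?_).trans ?_
        · intro z
          rw [abs_mul, abs_of_nonneg (hchoose0 _)]
          refine mul_le_mul (hchoose z.1) ?_ (abs_nonneg _) (by positivity)
          rw [abs_mul, abs_of_pos (Real.exp_pos _)]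
          refine mul_le_mul (hexp2 _ _ ht0 htS) ?_ (abs_nonneg _) (by positivity)
          refine (one_add_pow_sub_one η (by linarith) _).trans ?_
          gcongr
          · norm_num
          · exact z.2.2.le
        · rw [hcard]
          calc _ ≤ 2 ^ n * (2 ^ b * ((2 : ℝ) ^ c * (2 ^ (37 * (S * L)) * (2 ^ (S * L) * |η|)))) := by gcongr
            _ = 2 ^ (n + b + c + 38 * (S * L)) * |η| := by
              rw [show n + b + c + 38 * (S * L) = n + b + c + 37 * (S * L) + S * L by ring]
              simp only [pow_add]; ring
            _ ≤ (1 / 2) ^ E := by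
              rw [one_div, inv_pow, ← one_div, le_div_iff₀ (by positivity)]
              refine le_trans (le_of_eq ?_) hη
              rw [show E + n + b + c + 38 * (S * L) = n + b + c + 38 * (S * L) + E by ring, pow_add _ _ E]
              ring
      rw [hdec]
      have := abs_add_three (∑ z, (p z : ℝ) * (G z).eval t) (∑ z : Fin K × Fin L, (p z : ℝ) * (((r + s * k).choose z.1 : ℝ) * (Real.exp ((z.2 : ℕ) * v * t) - (exT T' (((z.2 : ℕ) : ℝ) * v)).eval t))) (∑ z : Fin K × Fin L, (p z : ℝ) * (((r + s * k).choose z.1 : ℝ) * (Real.exp ((z.2 : ℕ) * v * t) * ((1 + η) ^ (s * (z.2 : ℕ)) - 1))))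
      linarith
    -- arithmetic
    let Zf : F := ∑ z : Fin K × Fin L, (p z : F) * (((r + s * k).choose z.1 : ℕ) : F) * (x ^ (r * (z.2 : ℕ)) * (g ^ (s * (z.2 : ℕ)) * 5 ^ (S * L - s * (z.2 : ℕ))))
    have hsj : ∀ z : Fin K × Fin L, s * (z.2 : ℕ) ≤ S * L := fun z => Nat.mul_le_mul hs.le z.2.2.le
    have hZint : IsIntegral ℤ Zf := by
      apply IsIntegral.sum
      intro z _
      have i1 : IsIntegral ℤ (p z : F) := by
        have := isIntegral_algebraMap (R := ℤ) (A := F) (x := p z)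
        simpa using this
      have i2 : IsIntegral ℤ ((((r + s * k).choose z.1 : ℕ) : F)) := by
        have := isIntegral_algebraMap (R := ℤ) (A := F) (x := ((r + s * k).choose z.1 : ℤ))
        simpa using this
      have i3 : IsIntegral ℤ (5 : F) := by
        have := isIntegral_algebraMap (R := ℤ) (A := F) (x := 5)
        simpa using this
      exact (i1.mul i2).mul ((hx.pow _).mul ((hg.pow _).mul (i3.pow _)))
    have hZσ : ∀ σ : F →ₐ[ℚ] ℂ, ‖σ Zf‖ ≤ 2 ^ μ := by
      intro σ
      simp only [Zf, map_sum]
      refine (norm_sum_le _ _).trans ?_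
      calc _ ≤ ∑ _z : Fin K × Fin L, (2 : ℝ) ^ b * 2 ^ c * (2 ^ (A * R * L) * 2 ^ (34 * (S * L))) := by
            apply Finset.sum_le_sum
            intro z _
            simp only [map_mul, map_pow, map_intCast, map_natCast, norm_mul, norm_pow, map_ofNat]
            have k1 : ‖((p z : ℤ) : ℂ)‖ ≤ 2 ^ b := by rw [Complex.norm_intCast]; exact hpR z
            have k2 : ‖((((r + s * k).choose z.1 : ℕ)) : ℂ)‖ ≤ 2 ^ c := by rw [Complex.norm_natCast]; exact hchoose z.1
            have k3 : ‖σ x‖ ^ (r * (z.2 : ℕ)) ≤ 2 ^ (A * R * L) := by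
              calc ‖σ x‖ ^ (r * (z.2 : ℕ)) ≤ (2 ^ A) ^ (r * (z.2 : ℕ)) := by gcongr; exact hxσ σ
                _ = 2 ^ (A * (r * (z.2 : ℕ))) := (pow_mul _ _ _).symm
                _ ≤ 2 ^ (A * R * L) := by
                  apply pow_le_pow_right₀ (by norm_num)
                  rw [mul_assoc]
                  exact Nat.mul_le_mul_left _ (Nat.mul_le_mul hr.le z.2.2.le)
            have k4 : ‖σ g‖ ^ (s * (z.2 : ℕ)) * ‖(5 : ℂ)‖ ^ (S * L - s * (z.2 : ℕ)) ≤ 2 ^ (34 * (S * L)) := by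
              calc _ ≤ (2 ^ 34 : ℝ) ^ (s * (z.2 : ℕ)) * (2 ^ 34) ^ (S * L - s * (z.2 : ℕ)) := by
                    gcongr
                    · exact hgσ σ
                    · norm_num
                _ = (2 ^ 34) ^ (S * L) := by
                    rw [← pow_add]; congr 1; have := hsj z; omega
                _ = _ := by rw [← pow_mul]
            gcongr
        _ = ((K * L : ℕ) : ℝ) * ((2 : ℝ) ^ b * 2 ^ c * (2 ^ (A * R * L) * 2 ^ (34 * (S * L)))) := by
            rw [Finset.sum_const, Finset.card_univ, hcard, nsmul_eq_mul]
        _ ≤ 2 ^ n * ((2 : ℝ) ^ b * 2 ^ c * (2 ^ (A * R * L) * 2 ^ (34 * (S * L)))) := by gcongr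
        _ = 2 ^ μ := by rw [hμ]; simp only [pow_add]; ring
    have hιZ : ι Zf = 5 ^ (S * L) * P := by
      simp only [Zf, map_sum, hP, Finset.mul_sum]
      apply Finset.sum_congr rfl
      intro z _
      simp only [map_mul, map_pow, map_intCast, map_natCast, map_ofNat, hxu, hgη]
      rw [show (5 : ℝ) ^ (S * L) = 5 ^ (s * (z.2 : ℕ)) * 5 ^ (S * L - s * (z.2 : ℕ)) by
        rw [← pow_add]; congr 1; have := hsj z; omega]
      rw [mul_pow 5, mul_pow (Real.exp u ^ r), ← pow_mul, ← pow_mul]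
      ring
    by_contra hP0
    have hZ0 : Zf ≠ 0 := by
      intro h
      rw [h, map_zero] at hιZ
      exact hP0 (by
        rcases mul_eq_zero.1 hιZ.symm with h | h
        · exact absurd h (by positivity)
        · exact h)
    have hl := liouville ι hd Zf hZint hZ0 (2 ^ μ) (one_le_pow₀ (by norm_num)) hZσ
    rw [hιZ, abs_mul, abs_of_pos (by positivity)] at hl
    have h5 : (5 : ℝ) ^ (S * L) ≤ 2 ^ (3 * (S * L)) := by
      rw [pow_mul (2 : ℝ) 3]; exact pow_le_pow_left₀ (by norm_num) (by norm_num) _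
    have : (5 : ℝ) ^ (S * L) * |P| * (2 ^ μ) ^ 5 ≤ 3 / 4 := by
      calc _ ≤ (2:ℝ) ^ (3 * (S * L)) * (3 * (1 / 2) ^ E) * (2 ^ μ) ^ 5 := by gcongr
        _ = 3 * ((1 / 2 : ℝ) ^ E * 2 ^ (3 * (S * L) + 5 * μ)) := by
            rw [← pow_mul, pow_add, mul_comm μ 5]; ring
        _ = 3 / 4 := by
            rw [hE, pow_add _ _ 2, mul_right_comm, ← mul_pow]
            norm_num
    linarith
  -- conclusion via the zero estimate
  let Q : Fin L → ℝ[X] := fun j => ∑ i : Fin K, C (p (i, j) : ℝ) * chk 1 i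
  have hQe : ∀ j (X0 : ℕ), (Q j).eval (X0 : ℝ) = ∑ i : Fin K, (p (i, j) : ℝ) * ((X0.choose i : ℕ) : ℝ) := by
    intro j X0
    simp only [Q, eval_finsetSum, eval_mul, eval_C]
    apply Finset.sum_congr rfl
    intro i _
    rw [chk_eval_nat 1 X0 X0 i (by ring)]
  have hz := zero_est K L R S k hLR hRk Q
    (by
      by_contra hall
      push Not at hall
      apply hp0
      have key : ∀ N : ℕ, ∀ (hN : N < K) (j : Fin L), p (⟨N, hN⟩, j) = 0 := by
        intro N
        induction N using Nat.strong_induction_on with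
        | _ N ih =>
          intro hN j
          have h1 := hQe j N
          rw [hall j, eval_zero, Finset.sum_eq_single ⟨N, hN⟩] at h1
          · simp at h1
            exact_mod_cast h1.symm
          · intro i _ hi
            rcases lt_trichotomy (i : ℕ) N with h | h | h
            · have := ih i h i.2 j
              rw [show i = ⟨(i : ℕ), i.2⟩ from rfl, this]; simp
            · exact absurd (Fin.ext h) hi
            · rw [Nat.choose_eq_zero_of_lt h]; simp
          · intro h; exact absurd (Finset.mem_univ _) h
      ext ⟨i, j⟩
      exact key i i.2 j)
    (by
      intro j
      apply natDegree_sum_le_of_forall_le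
      intro i _
      refine (natDegree_C_mul_le _ _).trans ((chk_natDegree_le _ _).trans i.2.le))
    (Real.exp u)
    (by
      intro a b' hab
      simp only [← Real.exp_nat_mul, Real.exp_eq_exp] at hab
      have := mul_right_cancel₀ hu hab
      exact_mod_cast this)
    (fun s => (Real.exp v * (1 + η)) ^ s)
    (by
      intro s
      apply pow_ne_zero
      apply mul_ne_zero (Real.exp_ne_zero _)
      have := abs_le.1 hη4
      intro h
      linarith)
    (by
      intro r hr s hs
      rw [← hmain r hr s hs, Fintype.sum_prod_type, Finset.sum_comm]
      apply Finset.sum_congr rfl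
      intro j _
      have : (r : ℝ) + s * k = ((r + s * k : ℕ) : ℝ) := by push_cast; ring
      rw [this, hQe, Finset.sum_mul]
      apply Finset.sum_congr rfl
      intro i _
      ring)
  omega

end PartC

section PartD
open Polynomial

theorem core {F : Type*} [Field F] [NumberField F] (ι : F →ₐ[ℚ] ℝ)
    (hd : Module.finrank ℚ F ≤ 6) (x g : F) (hx : IsIntegral ℤ x) (hg : IsIntegral ℤ g)
    (A : ℕ) (hA : 1 ≤ A)
    (hxσ : ∀ σ : F →ₐ[ℚ] ℂ, ‖σ x‖ ≤ 2 ^ A) (hgσ : ∀ σ : F →ₐ[ℚ] ℂ, ‖σ g‖ ≤ 2 ^ 34)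
    (u η : ℝ) (hu : u ≠ 0) (hxu : ι x = Real.exp u) (hku : |2327947776000000000 * u| ≤ 25)
    (hgη : ι g = 5 * (Real.exp (2327947776000000000 * u) * (1 + η)))
    (hη : |η| * 2 ^ (24000000000000000 * A) ≤ 1) : False := by
  have h1 : A ≤ 2 ^ A := Nat.lt_two_pow_self.le
  have h2 : 1000000000000000000 * A ≤ 2 ^ (61 * A) := by
    calc 1000000000000000000 * A ≤ 2 ^ 60 * 2 ^ A := Nat.mul_le_mul (by norm_num) h1
      _ ≤ 2 ^ (60 * A) * 2 ^ A := Nat.mul_le_mul_right _ (Nat.pow_le_pow_right (by norm_num) (by omega))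
      _ = 2 ^ (61 * A) := by rw [← pow_add]; congr 1; ring
  obtain ⟨n, hn⟩ : ∃ n, n = 61 * A := ⟨_, rfl⟩
  obtain ⟨b, hb⟩ : ∃ b, b = 2100000000000000 * A := ⟨_, rfl⟩
  obtain ⟨K, hK⟩ : ∃ b, b = 10000000000000 * A := ⟨_, rfl⟩
  obtain ⟨S, hS⟩ : ∃ b, b = 100000000 * A := ⟨_, rfl⟩
  obtain ⟨c, hc⟩ : ∃ b, b = 65 * K := ⟨_, rfl⟩
  obtain ⟨T', hT⟩ : ∃ b, b = 24000000000000000 * A := ⟨_, rfl⟩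
  obtain ⟨μ, hμ⟩ : ∃ d, d = n + b + c + A * 10000100000 * 100000 + 34 * (S * 100000) := ⟨_, rfl⟩
  obtain ⟨E, hE⟩ : ∃ b, b = 3 * (S * 100000) + 5 * μ + 2 := ⟨_, rfl⟩
  obtain ⟨ω, hω⟩ : ∃ d, d = 2 + 2 * n + b + c + 37 * (S * 100000) + E := ⟨_, rfl⟩
  refine coreAbs ι hd x g hx hg A K 100000 10000100000 S T' 2327947776000000000 b n c μ E ω
    hxσ hgσ ?_ ?_ ?_ hμ hE hω ?_ ?_ ?_ ?_ ?_ ?_ ?_ ?_ u η hu hxu ?_ ?_ ?_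
  · rw [hn]; omega
  · rw [hn]; omega
  · rw [hc, pow_mul]
    refine pow_le_pow_left₀ (by norm_num) (by norm_num) _
  · have hw : ω ≤ 23700000000000000 * A := by omega
    have e : K + T' = 24010000000000000 * A := by omega
    rw [e, hb, hK]
    calc ω * (24010000000000000 * A) ≤ 23700000000000000 * A * (24010000000000000 * A) := Nat.mul_le_mul_right _ hw
      _ = 23700000000000000 * 24010000000000000 * (A * A) := by ring
      _ ≤ 2100000000000000 * (10000000000000 * 100000) * (A * A) := Nat.mul_le_mul_right _ (by norm_num)
      _ = _ := by ring
  · omega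
  · omega
  · norm_num
  · norm_num
  · omega
  · norm_num
  · omega
  · exact_mod_cast hku
  · rw [hgη]; norm_num
  · refine le_trans (mul_le_mul_of_nonneg_left ?_ (abs_nonneg _)) hη
    exact pow_le_pow_right₀ (by norm_num) (by omega)

end PartD

section PartE
open Polynomial

theorem exists_alpha : ∃ α : ℝ, 9 / 5 < α ∧ α < 19 / 10 ∧ α ^ 3 = α ^ 2 + α + 1 := by
  have hc : ContinuousOn (fun x : ℝ => x ^ 3 - x ^ 2 - x - 1) (Set.Icc (9 / 5) (19 / 10)) := by fun_prop
  have := intermediate_value_Ioo (by norm_num) hc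
  have h0 : (0 : ℝ) ∈ Set.Ioo ((9 / 5 : ℝ) ^ 3 - (9 / 5) ^ 2 - 9 / 5 - 1) ((19 / 10 : ℝ) ^ 3 - (19 / 10) ^ 2 - 19 / 10 - 1) := by
    constructor <;> norm_num
  obtain ⟨α, ⟨h1, h2⟩, h3⟩ := this h0
  refine ⟨α, h1, h2, ?_⟩
  simp only at h3
  linarith

theorem isInt_phi {R : Type*} [Field R] [Algebra ℤ R] (x : R) (hx : x ^ 2 = x + 1) : IsIntegral ℤ x := by
  refine ⟨X ^ 2 - X - 1, by monicity!, ?_⟩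
  simp [hx]

theorem isInt_phi' {R : Type*} [Field R] [Algebra ℤ R] (x : R) (hx : x ^ 2 = x + 1) : IsIntegral ℤ x⁻¹ := by
  refine ⟨X ^ 2 + X - 1, by monicity!, ?_⟩
  have h0 : x ≠ 0 := by rintro rfl; simp at hx
  simp
  field_simp
  linear_combination -hx

theorem isInt_tr {R : Type*} [Field R] [Algebra ℤ R] (x : R) (hx : x ^ 3 = x ^ 2 + x + 1) : IsIntegral ℤ x := by
  refine ⟨X ^ 3 - X ^ 2 - X - 1, by monicity!, ?_⟩
  simp [hx]
  ring

theorem isInt_tr' {R : Type*} [Field R] [Algebra ℤ R] (x : R) (hx : x ^ 3 = x ^ 2 + x + 1) : IsIntegral ℤ x⁻¹ := by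
  refine ⟨X ^ 3 + X ^ 2 + X - 1, by monicity!, ?_⟩
  have h0 : x ≠ 0 := by rintro rfl; simp at hx
  simp
  field_simp
  linear_combination -hx

theorem isInt_zpow {R : Type*} [Field R] [Algebra ℤ R] (x : R) (h : IsIntegral ℤ x) (h' : IsIntegral ℤ x⁻¹) (z : ℤ) :
    IsIntegral ℤ (x ^ z) := by
  rcases Int.eq_nat_or_neg z with ⟨n, rfl | rfl⟩
  · rw [zpow_natCast]; exact h.pow n
  · rw [zpow_neg, zpow_natCast, ← inv_pow]; exact h'.pow n

theorem norm_le_two (y : ℝ) (h : y ^ 3 ≤ y ^ 2 + y + 1) : y ≤ 2 := by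
  by_contra hy
  push Not at hy
  nlinarith [mul_pos (sub_pos.2 hy) (sub_pos.2 hy), mul_pos (mul_pos (sub_pos.2 hy) (sub_pos.2 hy)) (sub_pos.2 hy)]

theorem nrm_tr (x : ℂ) (hx : x ^ 3 = x ^ 2 + x + 1) : ‖x‖ ≤ 2 := by
  apply norm_le_two
  rw [← norm_pow, hx]
  refine (norm_add_le _ _).trans ?_
  refine (add_le_add_left (norm_add_le _ _) _).trans ?_
  simp

theorem nrm_tr' (x : ℂ) (hx : x ^ 3 = x ^ 2 + x + 1) : ‖x⁻¹‖ ≤ 2 := by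
  apply norm_le_two
  have h0 : x ≠ 0 := by rintro rfl; simp at hx
  have : x⁻¹ ^ 3 = 1 - x⁻¹ - x⁻¹ ^ 2 := by field_simp; linear_combination -hx
  rw [← norm_pow, this]
  refine (norm_sub_le _ _).trans ?_
  refine (add_le_add_left (norm_sub_le _ _) _).trans ?_
  simp
  linarith

theorem nrm_phi (x : ℂ) (hx : x ^ 2 = x + 1) : ‖x‖ ≤ 2 := by
  have h : ‖x‖ ^ 2 ≤ ‖x‖ + 1 := by
    rw [← norm_pow, hx]
    refine (norm_add_le _ _).trans ?_
    simp
  nlinarith [norm_nonneg x]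

theorem nrm_phi' (x : ℂ) (hx : x ^ 2 = x + 1) : ‖x⁻¹‖ ≤ 2 := by
  have h0 : x ≠ 0 := by rintro rfl; simp at hx
  have : x⁻¹ ^ 2 = 1 - x⁻¹ := by field_simp; linear_combination -hx
  have h : ‖x⁻¹‖ ^ 2 ≤ ‖x⁻¹‖ + 1 := by
    rw [← norm_pow, this]
    refine (norm_sub_le _ _).trans ?_
    simp
    linarith
  nlinarith [norm_nonneg x⁻¹]

theorem nrm_zpow {R : Type*} [NormedField R] (x : R) (h : ‖x‖ ≤ 2) (h' : ‖x⁻¹‖ ≤ 2) (z : ℤ) (N : ℕ) (hz : z.natAbs ≤ N) :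
    ‖x ^ z‖ ≤ 2 ^ N := by
  refine le_trans ?_ (pow_le_pow_right₀ (by norm_num : (1 : ℝ) ≤ 2) hz)
  rcases Int.eq_nat_or_neg z with ⟨n, rfl | rfl⟩
  · rw [zpow_natCast, norm_pow]
    simp only [Int.natAbs_natCast]
    gcongr
  · rw [zpow_neg, zpow_natCast, ← inv_pow, norm_pow]
    simp only [Int.natAbs_neg, Int.natAbs_natCast]
    gcongr

theorem irr_tr : Irreducible (X ^ 3 - X ^ 2 - X - 1 : ℚ[X]) := by
  have hm : (X ^ 3 - X ^ 2 - X - 1 : ℚ[X]).Monic := by monicity!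
  have hd : (X ^ 3 - X ^ 2 - X - 1 : ℚ[X]).natDegree = 3 := by compute_degree!
  rw [hm.irreducible_iff_roots_eq_zero_of_degree_le_three (by omega) (by omega)]
  rw [Multiset.eq_zero_iff_forall_notMem]
  intro r hr
  rw [mem_roots hm.ne_zero, IsRoot.def] at hr
  simp at hr
  have h1 : IsIntegral ℤ r := isInt_tr r (by linear_combination hr)
  obtain ⟨z, hz⟩ := IsIntegrallyClosed.isIntegral_iff.1 h1
  simp at hz
  subst hz
  have h2 : z ^ 3 - z ^ 2 - z - 1 = 0 := by exact_mod_cast hr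
  have h3 : z ∣ 1 := ⟨z ^ 2 - z - 1, by linear_combination -h2⟩
  rcases Int.isUnit_iff.1 (isUnit_of_dvd_one h3) with rfl | rfl <;> norm_num at h2

open IntermediateField in
theorem finrank_al (α : ℝ) (hα : α ^ 3 = α ^ 2 + α + 1) : Module.finrank ℚ ℚ⟮α⟯ = 3 := by
  have hm : (X ^ 3 - X ^ 2 - X - 1 : ℚ[X]).Monic := by monicity!
  have hd : (X ^ 3 - X ^ 2 - X - 1 : ℚ[X]).natDegree = 3 := by compute_degree!
  have hi : IsIntegral ℚ α := (isInt_tr α hα).tower_top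
  rw [adjoin.finrank hi, ← minpoly.eq_of_irreducible_of_monic irr_tr (by simp [hα]; ring) hm, hd]

open IntermediateField in
theorem finrank_ph (φ : ℝ) (hφ : φ ^ 2 = φ + 1) : Module.finrank ℚ ℚ⟮φ⟯ ≤ 2 := by
  have hm : (X ^ 2 - X - 1 : ℚ[X]).Monic := by monicity!
  have hd : (X ^ 2 - X - 1 : ℚ[X]).natDegree = 2 := by compute_degree!
  have hi : IsIntegral ℚ φ := (isInt_phi φ hφ).tower_top
  rw [adjoin.finrank hi, ← hd]
  exact natDegree_le_of_dvd (minpoly.dvd _ _ (by simp [hφ])) hm.ne_zero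

open IntermediateField in
theorem pow_ne (α : ℝ) (hα : α ^ 3 = α ^ 2 + α + 1) (a b : ℕ) (ha : 1 ≤ a) :
    Real.goldenRatio ^ a ≠ α ^ b := by
  intro h
  set y : ℝ := Real.goldenRatio ^ a with hy
  have h1 : ℚ⟮y⟯ ≤ ℚ⟮Real.goldenRatio⟯ := by
    rw [adjoin_simple_le_iff]
    exact pow_mem (mem_adjoin_simple_self ℚ _) _
  have h2 : ℚ⟮y⟯ ≤ ℚ⟮α⟯ := by
    rw [adjoin_simple_le_iff, h]
    exact pow_mem (mem_adjoin_simple_self ℚ _) _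
  have d1 := finrank_dvd_of_le_right h1
  have d2 := finrank_dvd_of_le_right h2
  rw [finrank_al α hα] at d2
  have hi : IsIntegral ℚ Real.goldenRatio := (isInt_phi _ Real.goldenRatio_sq).tower_top
  have hpos : 0 < Module.finrank ℚ ℚ⟮Real.goldenRatio⟯ := by
    rw [adjoin.finrank hi]; exact minpoly.natDegree_pos hi
  have h3 := finrank_ph _ Real.goldenRatio_sq
  have h4 := Nat.le_of_dvd hpos d1
  have h5 : Module.finrank ℚ ℚ⟮y⟯ = 1 := by
    rcases (Nat.dvd_prime Nat.prime_three).1 d2 with h | h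
    · exact h
    · omega
  rw [IntermediateField.finrank_eq_one_iff] at h5
  have h6 := mem_adjoin_simple_self ℚ y
  rw [h5, mem_bot] at h6
  obtain ⟨q, hq⟩ := h6
  obtain ⟨c, rfl⟩ : ∃ c, a = c + 1 := ⟨a - 1, by omega⟩
  rw [hy, ← Real.goldenRatio_mul_fib_succ_add_fib] at hq
  have hf : (Nat.fib (c + 1) : ℕ) ≠ 0 := (Nat.fib_pos.2 (by omega)).ne'
  apply (Real.goldenRatio_irrational.mul_natCast hf).add_natCast (Nat.fib c)
  exact ⟨q, hq⟩

end PartE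

section PartG
open Polynomial

theorem ge_zpow (y : ℝ) (hy : 0 < y) (h : y ≤ 2) (h' : y⁻¹ ≤ 2) (z : ℤ) (N : ℕ) (hz : z.natAbs ≤ N) :
    y ^ z ≤ 2 ^ N ∧ (1 / 2) ^ N ≤ y ^ z := by
  have k1 : ∀ z : ℤ, z.natAbs ≤ N → y ^ z ≤ 2 ^ N := by
    intro z hz
    have := nrm_zpow y (by rwa [Real.norm_of_nonneg hy.le]) (by rwa [Real.norm_of_nonneg (by positivity)]) z N hz
    rwa [Real.norm_of_nonneg (by positivity)] at this
  refine ⟨k1 z hz, ?_⟩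
  have h2 := k1 (-z) (by simpa using hz)
  rw [zpow_neg] at h2
  rw [one_div, inv_pow]
  rw [inv_le_comm₀ (by positivity) (by positivity)] 
  exact h2

theorem size_bd (φ α v θ η : ℝ) (hφ0 : 0 < φ) (hφ1 : 1 < φ) (hφ2 : φ < 2) (hα1 : 9 / 5 < α) (hα2 : α < 19 / 10)
    (n0 m0 : ℤ) (hn0 : n0.natAbs ≤ 12) (hm0 : m0.natAbs ≤ 13)
    (hθ : θ = φ ^ n0 * α ^ (-(m0 + 1)) * (3 * α ^ 2 - 2 * α - 1) / √5)
    (h5 : √5 = 2 * φ - 1) (hη5 : -(1 / 4) ≤ η) (hη6 : η ≤ 1 / 4) (hθη : θ = Real.exp v * (1 + η)) : |v| ≤ 25 := by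
  have hα0 : 0 < α := by linarith
  have p1 := ge_zpow φ hφ0 hφ2.le (by
    rw [inv_le_comm₀ hφ0 (by norm_num)]; linarith) n0 12 hn0
  have p2 := ge_zpow α hα0 (by linarith) (by
    rw [inv_le_comm₀ hα0 (by norm_num)]; linarith) (-(m0 + 1)) 14 (by omega)
  have w1 : (4 : ℝ) ≤ 3 * α ^ 2 - 2 * α - 1 := by nlinarith
  have w2 : 3 * α ^ 2 - 2 * α - 1 ≤ 8 := by nlinarith
  have v1 : (1 : ℝ) ≤ 2 * φ - 1 := by linarith
  have v2 : 2 * φ - 1 ≤ 4 := by linarith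
  have e1 : θ ≤ 2 ^ 29 := by
    rw [hθ, h5, div_le_iff₀ (by linarith)]
    calc _ ≤ (2 : ℝ) ^ 12 * 2 ^ 14 * 8 := by
          gcongr
          · exact p1.1
          · exact p2.1
      _ = 2 ^ 29 * 1 := by norm_num
      _ ≤ _ := by gcongr
  have e2 : (1 / 2) ^ 26 ≤ θ := by
    rw [hθ, h5, le_div_iff₀ (by linarith)]
    calc (1 / 2) ^ 26 * (2 * φ - 1) ≤ (1 / 2) ^ 26 * 4 := by gcongr
      _ = (1 / 2) ^ 12 * (1 / 2) ^ 14 * 4 := by norm_num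
      _ ≤ _ := by
          gcongr
          · exact p1.2
          · exact p2.2
  have ex : (2 : ℝ) ^ 30 ≤ Real.exp 25 := by
    have : Real.exp 25 = Real.exp 1 ^ 25 := by rw [← Real.exp_nat_mul]; norm_num
    rw [this]
    calc (2 : ℝ) ^ 30 ≤ (2.7 : ℝ) ^ 25 := by norm_num
      _ ≤ _ := by gcongr; linarith [Real.exp_one_gt_d9]
  rw [abs_le]
  constructor
  · rw [← Real.exp_le_exp, Real.exp_neg]
    have : (Real.exp 25)⁻¹ ≤ (2 ^ 30)⁻¹ := inv_anti₀ (by norm_num) ex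
    refine this.trans ?_
    norm_num at e2 ⊢
    nlinarith [Real.exp_pos (v)]
  · rw [← Real.exp_le_exp]
    refine le_trans ?_ ex
    norm_num at e1 ⊢
    nlinarith [Real.exp_pos (v)]

theorem fieldCore0 {F : Type*} [Field F] [NumberField F] (ι : F →ₐ[ℚ] ℝ) (hd : Module.finrank ℚ F ≤ 6)
    (f t : F) (hf : f ^ 2 = f + 1) (ht : t ^ 3 = t ^ 2 + t + 1) (α : ℝ) (hα1 : 9 / 5 < α) (hα2 : α < 19 / 10) (hα : α ^ 3 = α ^ 2 + α + 1)
    (ιf : ι f = Real.goldenRatio) (ιt : ι t = α)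
    (k : ℕ) (hk : k = 2327947776000000000) (a b : ℕ) (ha : 1 ≤ a) (n0 m0 : ℤ) (hn0 : n0.natAbs ≤ 12) (hm0 : m0.natAbs ≤ 13)
    (θ η : ℝ) (hθ : θ = Real.goldenRatio ^ n0 * α ^ (-(m0 + 1)) * (3 * α ^ 2 - 2 * α - 1) / √5)
    (hη : 1 + η = θ * (Real.goldenRatio ^ a / α ^ b) ^ k)
    (hηs : |η| * 2 ^ (24000000000000000 * (a + b)) ≤ 1) : False := by
  have hkR : (2327947776000000000 : ℝ) = (k : ℝ) := by rw [hk]; norm_num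
  set φ : ℝ := Real.goldenRatio with hφdef
  have hφ : φ ^ 2 = φ + 1 := Real.goldenRatio_sq
  have hφ0 : 0 < φ := Real.goldenRatio_pos
  have hφ1 : 1 < φ := Real.one_lt_goldenRatio
  have hφ2 : φ < 2 := Real.goldenRatio_lt_two
  have hα0 : 0 < α := by linarith
  have h5 : √5 = 2 * φ - 1 := by rw [hφdef, Real.goldenRatio]; ring
  have h55 : (2 * φ - 1) * (2 * φ - 1) = 5 := by nlinarith
  have I2 : IsIntegral ℤ (2 : F) := by
    have := isIntegral_algebraMap (R := ℤ) (A := F) (x := 2)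
    simpa using this
  have I3 : IsIntegral ℤ (3 : F) := by
    have := isIntegral_algebraMap (R := ℤ) (A := F) (x := 3)
    simpa using this
  have I1 : IsIntegral ℤ (1 : F) := isIntegral_one
  have If := isInt_phi f hf
  have If' := isInt_phi' f hf
  have It := isInt_tr t ht
  have It' := isInt_tr' t ht
  have x0 : 0 < φ⁻¹ ^ a * α ^ b := by positivity
  have hku : Real.exp ((k : ℝ) * Real.log (φ⁻¹ ^ a * α ^ b)) = (φ⁻¹ ^ a * α ^ b) ^ k := by
    rw [Real.exp_nat_mul, Real.exp_log x0]
  have hmul : (φ⁻¹ ^ a * α ^ b) * (φ ^ a / α ^ b) = 1 := by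
    rw [inv_pow]; field_simp
  have hθη : θ = Real.exp ((k : ℝ) * Real.log (φ⁻¹ ^ a * α ^ b)) * (1 + η) := by
    rw [hη, hku, mul_left_comm, ← mul_pow, hmul, one_pow, mul_one]
  have hη4 : |η| ≤ 1 / 4 := by
    have : (4 : ℝ) ≤ 2 ^ (24000000000000000 * (a + b)) := by
      calc (4 : ℝ) = 2 ^ 2 := by norm_num
        _ ≤ _ := pow_le_pow_right₀ (by norm_num) (by omega)
    nlinarith [abs_nonneg η]
  obtain ⟨hη5, hη6⟩ := abs_le.1 hη4
  refine core (F := F) ι hd (f⁻¹ ^ a * t ^ b)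
    ((2 * f - 1) * f ^ n0 * t ^ (-(m0 + 1)) * (3 * t ^ 2 - 2 * t - 1))
    ((If'.pow a).mul (It.pow b))
    ((((I2.mul If).sub I1).mul (isInt_zpow f If If' n0)).mul (isInt_zpow t It It' _) |>.mul
      (((I3.mul (It.pow 2)).sub (I2.mul It)).sub I1))
    (a + b) (by omega) ?_ ?_ (Real.log (φ⁻¹ ^ a * α ^ b)) η ?_ ?_ ?_ ?_ hηs
  · intro σ
    have s1 : (σ f) ^ 2 = σ f + 1 := by rw [← map_pow, hf]; simp
    have s2 : (σ t) ^ 3 = (σ t) ^ 2 + σ t + 1 := by rw [← map_pow, ht]; simp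
    rw [map_mul, map_pow, map_pow, map_inv₀, norm_mul, norm_pow, norm_pow, pow_add]
    have := nrm_phi' _ s1
    have := nrm_tr _ s2
    gcongr
  · intro σ
    have s1 : (σ f) ^ 2 = σ f + 1 := by rw [← map_pow, hf]; simp
    have s2 : (σ t) ^ 3 = (σ t) ^ 2 + σ t + 1 := by rw [← map_pow, ht]; simp
    have r1 := nrm_phi _ s1
    have r2 := nrm_tr _ s2
    simp only [map_mul, map_sub, map_zpow₀, map_pow, map_one, map_ofNat, norm_mul]
    have q1 := nrm_zpow _ r1 (nrm_phi' _ s1) n0 12 hn0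
    have q2 := nrm_zpow _ r2 (nrm_tr' _ s2) (-(m0 + 1)) 14 (by omega)
    have q3 : ‖2 * σ f - 1‖ ≤ 5 := by
      refine (norm_sub_le _ _).trans ?_
      rw [norm_mul]; norm_num; linarith
    have q4 : ‖3 * σ t ^ 2 - 2 * σ t - 1‖ ≤ 17 := by
      refine (norm_sub_le _ _).trans ?_
      refine (add_le_add_left (norm_sub_le _ _) _).trans ?_
      rw [norm_mul, norm_mul, norm_pow]; norm_num
      nlinarith [norm_nonneg (σ t)]
    calc _ ≤ (5 : ℝ) * 2 ^ 12 * 2 ^ 14 * 17 := by gcongr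
      _ ≤ 2 ^ 34 := by norm_num
  · intro h
    have h1 : φ⁻¹ ^ a * α ^ b = 1 := by
      rw [← Real.exp_log x0, h, Real.exp_zero]
    apply pow_ne α hα a b ha
    rw [inv_pow] at h1
    field_simp at h1
    exact h1.symm
  · rw [Real.exp_log x0, map_mul, map_pow, map_pow, map_inv₀, ιf, ιt]
  · rw [hkR]
    exact size_bd φ α _ θ η hφ0 hφ1 hφ2 hα1 hα2 n0 m0 hn0 hm0 hθ h5 hη5 hη6 hθη
  · rw [hkR, ← hθη, hθ, h5]
    simp only [map_mul, map_sub, map_zpow₀, map_pow, map_one, map_ofNat, ιf, ιt]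
    have : (2 * φ - 1) ≠ 0 := by linarith
    rw [← h55]
    field_simp

open IntermediateField in
theorem fieldCore (α : ℝ) (hα1 : 9 / 5 < α) (hα2 : α < 19 / 10) (hα : α ^ 3 = α ^ 2 + α + 1)
    (k : ℕ) (hk : k = 2327947776000000000) (a b : ℕ) (ha : 1 ≤ a) (n0 m0 : ℤ) (hn0 : n0.natAbs ≤ 12) (hm0 : m0.natAbs ≤ 13)
    (θ η : ℝ) (hθ : θ = Real.goldenRatio ^ n0 * α ^ (-(m0 + 1)) * (3 * α ^ 2 - 2 * α - 1) / √5)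
    (hη : 1 + η = θ * (Real.goldenRatio ^ a / α ^ b) ^ k)
    (hηs : |η| * 2 ^ (24000000000000000 * (a + b)) ≤ 1) : False := by
  set φ : ℝ := Real.goldenRatio with hφdef
  have hφ : φ ^ 2 = φ + 1 := Real.goldenRatio_sq
  have i1 : IsIntegral ℚ φ := (isInt_phi φ hφ).tower_top
  have i2 : IsIntegral ℚ α := (isInt_tr α hα).tower_top
  have : FiniteDimensional ℚ ℚ⟮φ⟯ := adjoin.finiteDimensional i1
  have : FiniteDimensional ℚ ℚ⟮α⟯ := adjoin.finiteDimensional i2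
  let F := (ℚ⟮φ⟯ ⊔ ℚ⟮α⟯ : IntermediateField ℚ ℝ)
  have : FiniteDimensional ℚ F := IntermediateField.finiteDimensional_sup _ _
  have : NumberField F := ⟨⟩
  have hd : Module.finrank ℚ F ≤ 6 := by
    refine (finrank_sup_le _ _).trans ?_
    rw [finrank_al α hα]
    have := finrank_ph φ hφ
    omega
  let f : F := ⟨φ, (le_sup_left : ℚ⟮φ⟯ ≤ F) (mem_adjoin_simple_self ℚ φ)⟩
  let t : F := ⟨α, (le_sup_right : ℚ⟮α⟯ ≤ F) (mem_adjoin_simple_self ℚ α)⟩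
  have hf : f ^ 2 = f + 1 := Subtype.ext hφ
  have ht : t ^ 3 = t ^ 2 + t + 1 := Subtype.ext hα
  exact fieldCore0 (F := F) ((algebraMap F ℝ).toRatAlgHom) hd f t hf ht α hα1 hα2 hα rfl rfl k hk a b ha n0 m0 hn0 hm0 θ η hθ hη hηs

end PartG

theorem trib_D (α : ℝ) (hα1 : 9 / 5 < α) (hα : α ^ 3 = α ^ 2 + α + 1) (m : ℕ) :
    (trib (m + 2) : ℝ) + (α - 1) * trib (m + 1) + (α ^ 2 - α - 1) * trib m = α ^ (m + 1) := by
  induction m with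
  | zero => simp [trib]
  | succ m ih =>
    rw [pow_succ α (m + 1), ← ih]
    have : (trib (m + 1 + 2) : ℝ) = trib (m + 2) + trib (m + 1) + trib m := by
      rw [show m + 1 + 2 = m + 3 by ring, trib]; push_cast; ring
    rw [this]
    have h2 : m + 1 + 1 = m + 2 := rfl
    rw [h2]
    linear_combination (-(trib m : ℝ)) * hα

theorem trib_approx (α C : ℝ) (hα1 : 9 / 5 < α) (hα2 : α < 19 / 10) (hα : α ^ 3 = α ^ 2 + α + 1)
    (hC : C * (3 * α ^ 2 - 2 * α - 1) = α) (m : ℕ) : |(trib m : ℝ) - C * α ^ m| ≤ 2 := by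
  have hq0 : 0 < α ^ 2 - α - 1 := by nlinarith
  have hq1 : α ^ 2 - α - 1 ≤ 1 := by nlinarith
  obtain ⟨E, hE⟩ : ∃ E : ℕ → ℝ, E = fun m => (trib m : ℝ) - C * α ^ m := ⟨_, rfl⟩
  have hE' : ∀ m, E m = (trib m : ℝ) - C * α ^ m := fun m => by rw [hE]
  have hrec : ∀ m, E (m + 2) = (1 - α) * E (m + 1) - (α ^ 2 - α - 1) * E m := by
    intro m
    rw [hE', hE', hE']
    have h := trib_D α hα1 hα m
    have e : C * α ^ (m + 2) + (α - 1) * (C * α ^ (m + 1)) + (α ^ 2 - α - 1) * (C * α ^ m) = α ^ (m + 1) := by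
      calc _ = C * (3 * α ^ 2 - 2 * α - 1) * α ^ m := by ring
        _ = _ := by rw [hC]; ring
    linear_combination h - e
  have hQ : ∀ m, E (m + 1) ^ 2 - (1 - α) * E (m + 1) * E m + (α ^ 2 - α - 1) * E m ^ 2 ≤ 1 := by
    intro m
    induction m with
    | zero =>
      have h3 : (5 : ℝ) < 3 * α ^ 2 - 2 * α - 1 := by nlinarith
      have c1 : 0 < C := by nlinarith
      have c2 : C ≤ 2 / 5 := by nlinarith
      rw [hE', hE']
      simp only [trib]
      norm_num
      have c3 : C * α ≤ 19 / 25 := by nlinarith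
      have c4 : 0 < C * α := by positivity
      nlinarith
    | succ m ih =>
      rw [hrec m]
      have : ((1 - α) * E (m + 1) - (α ^ 2 - α - 1) * E m) ^ 2 - (1 - α) * ((1 - α) * E (m + 1) - (α ^ 2 - α - 1) * E m) * E (m + 1) + (α ^ 2 - α - 1) * E (m + 1) ^ 2 = (α ^ 2 - α - 1) * (E (m + 1) ^ 2 - (1 - α) * E (m + 1) * E m + (α ^ 2 - α - 1) * E m ^ 2) := by ring
      rw [this]
      calc _ ≤ (α ^ 2 - α - 1) * 1 := by gcongr
        _ ≤ 1 := by linarith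
  have h := hQ m
  rw [← hE']
  have h4 : (1 : ℝ) / 4 ≤ (α ^ 2 - α - 1) - (1 - α) ^ 2 / 4 := by nlinarith
  apply abs_le_of_sq_le_sq _ (by norm_num)
  nlinarith [sq_nonneg (E (m + 1) - (1 - α) / 2 * E m), mul_le_mul_of_nonneg_right h4 (sq_nonneg (E m))]

theorem trib_le (m : ℕ) : trib m ≤ 2 ^ m ∧ trib (m + 1) ≤ 2 ^ (m + 1) ∧ trib (m + 2) ≤ 2 ^ (m + 2) := by
  induction m with
  | zero => simp [trib]
  | succ m ih =>
    obtain ⟨h1, h2, h3⟩ := ih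
    refine ⟨h2, h3, ?_⟩
    rw [show m + 1 + 2 = m + 3 by ring, trib]
    have : (2 : ℤ) ^ m > 0 := by positivity
    rw [pow_succ] at h2
    rw [pow_succ, pow_succ] at h3 ⊢
    rw [pow_succ]
    linarith

theorem fib_approx (n : ℕ) : |(Nat.fib n : ℝ) - Real.goldenRatio ^ n / √5| ≤ 1 := by
  rw [Real.coe_fib_eq]
  have : (Real.goldenRatio ^ n - Real.goldenConj ^ n) / √5 - Real.goldenRatio ^ n / √5 = -(Real.goldenConj ^ n / √5) := by ring
  rw [this, abs_neg, abs_div, abs_pow]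
  have h5 : (1 : ℝ) ≤ |√5| := by
    rw [abs_of_nonneg (Real.sqrt_nonneg _)]
    exact Real.one_le_sqrt.2 (by norm_num)
  rw [div_le_one (by linarith)]
  refine le_trans (pow_le_one₀ (abs_nonneg _) ?_) h5
  rw [abs_le]
  exact ⟨Real.neg_one_lt_goldenConj.le, by linarith [Real.goldenConj_neg]⟩

theorem noLarge (k : ℕ) (hk : k = 2327947776000000000) (n m a b : ℕ) (n0 m0 : ℤ)
    (hn0 : n0.natAbs ≤ 12) (hm0 : m0.natAbs ≤ 13) (ha : 1 ≤ a) (hb : 1 ≤ b)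
    (hn : (n : ℤ) = n0 + k * a) (hm : (m : ℤ) = m0 + k * b)
    (h : (Nat.fib n : ℤ) + 5 = trib m) : False := by
  obtain ⟨α, hα1, hα2, hα⟩ := exists_alpha
  set φ := Real.goldenRatio with hφd
  have hφ0 : 0 < φ := Real.goldenRatio_pos
  have hφ1 : 1 < φ := Real.one_lt_goldenRatio
  have hφ : φ ^ 2 = φ + 1 := Real.goldenRatio_sq
  have hα0 : 0 < α := by linarith
  have s0 : 0 < √5 := by positivity
  have hs : √5 ≤ 4 := by rw [Real.sqrt_le_left (by norm_num)]; norm_num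
  have hw : (5 : ℝ) < 3 * α ^ 2 - 2 * α - 1 := by nlinarith
  have hw2 : 3 * α ^ 2 - 2 * α - 1 < 8 := by nlinarith
  obtain ⟨C, hC⟩ : ∃ C, C = α / (3 * α ^ 2 - 2 * α - 1) := ⟨_, rfl⟩
  have hC1 : C * (3 * α ^ 2 - 2 * α - 1) = α := by rw [hC]; exact div_mul_cancel₀ _ (by linarith)
  have hC0 : 0 < C := by rw [hC]; exact div_pos hα0 (by linarith)
  have hC2 : (1 : ℝ) / 5 ≤ C := by nlinarith
  have hR : (Nat.fib n : ℝ) + 5 = trib m := by exact_mod_cast h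
  have f1 := fib_approx n
  have t1 := trib_approx α C hα1 hα2 hα hC1 m
  -- a ≤ 2 b
  have hab : a ≤ 2 * b := by
    have g1 : φ ^ n ≤ 2 ^ (m + 2) := by
      have g2 : φ ^ n / √5 ≤ trib m := by linarith [(abs_le.1 f1).1]
      have g3 : (trib m : ℝ) ≤ 2 ^ m := by exact_mod_cast (trib_le m).1
      rw [div_le_iff₀ s0] at g2
      calc φ ^ n ≤ trib m * √5 := g2
        _ ≤ 2 ^ m * 4 := by gcongr
        _ = _ := by ring
    have g4 : (2 : ℝ) ^ n ≤ 2 ^ (2 * (m + 2)) := by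
      calc (2 : ℝ) ^ n ≤ (φ ^ 2) ^ n := by gcongr; linarith
        _ = (φ ^ n) ^ 2 := by rw [← pow_mul, ← pow_mul, mul_comm]
        _ ≤ (2 ^ (m + 2)) ^ 2 := by gcongr
        _ = _ := by rw [← pow_mul, mul_comm]
    have g5 : n ≤ 2 * (m + 2) := (pow_le_pow_iff_right₀ (by norm_num : (1 : ℝ) < 2)).1 g4
    subst hk
    omega
  have hφ' : φ ≠ 0 := hφ0.ne'
  have hα' : α ≠ 0 := hα0.ne'
  obtain ⟨θ, hθ⟩ : ∃ θ : ℝ, θ = φ ^ n0 * α ^ (-(m0 + 1)) * (3 * α ^ 2 - 2 * α - 1) / √5 := ⟨_, rfl⟩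
  obtain ⟨η, hη⟩ : ∃ η : ℝ, η = θ * (φ ^ a / α ^ b) ^ k - 1 := ⟨_, rfl⟩
  refine fieldCore α hα1 hα2 hα k hk a b ha n0 m0 hn0 hm0 θ η hθ (by rw [hη]; ring) ?_
  have e1 : θ * (φ ^ a / α ^ b) ^ k = (φ ^ n / √5) / (C * α ^ m) := by
    have z1 : φ ^ n = φ ^ n0 * (φ ^ a) ^ k := by
      rw [← zpow_natCast φ n, hn, zpow_add₀ hφ', ← pow_mul, ← zpow_natCast φ (a * k)]
      congr 2; push_cast; ring
    have z2 : α ^ m = α ^ m0 * (α ^ b) ^ k := by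
      rw [← zpow_natCast α m, hm, zpow_add₀ hα', ← pow_mul, ← zpow_natCast α (b * k)]
      congr 2; push_cast; ring
    have z3 : α ^ (-(m0 + 1)) = (α ^ m0)⁻¹ * α⁻¹ := by
      rw [zpow_neg, zpow_add₀ hα', zpow_one, mul_inv]
    have z4 : α ^ m0 ≠ 0 := zpow_ne_zero _ hα'
    have w0 : 3 * α ^ 2 - 2 * α - 1 ≠ 0 := by linarith
    rw [hθ, z1, z2, z3, hC, div_pow]
    generalize 3 * α ^ 2 - 2 * α - 1 = w at w0
    field_simp
  have p0 : 0 < C * α ^ m := by positivity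
  have e2 : |η| ≤ 8 / (C * α ^ m) := by
    rw [hη, e1, div_sub_one p0.ne', abs_div, abs_of_pos p0]
    gcongr
    rw [abs_le] at f1 t1 ⊢
    constructor <;> linarith [f1.1, f1.2, t1.1, t1.2]
  have hAm : 24000000000000000 * (a + b) * 2 + 14 ≤ m := by
    subst hk
    omega
  calc |η| * 2 ^ (24000000000000000 * (a + b)) ≤ 8 / (C * α ^ m) * 2 ^ (24000000000000000 * (a + b)) := by gcongr
    _ ≤ 1 := by
      rw [div_mul_eq_mul_div, div_le_one p0]
      have y1 : (2 : ℝ) ≤ α ^ 2 := by nlinarith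
      calc (8 : ℝ) * 2 ^ (24000000000000000 * (a + b)) ≤ 1 / 5 * (α ^ 14 * (α ^ 2) ^ (24000000000000000 * (a + b))) := by
            have y2 : (40 : ℝ) ≤ α ^ 14 := by
              calc (40 : ℝ) ≤ (9 / 5) ^ 14 := by norm_num
                _ ≤ _ := by gcongr
            have y3 : (2 : ℝ) ^ (24000000000000000 * (a + b)) ≤ (α ^ 2) ^ (24000000000000000 * (a + b)) := by gcongr
            have y4 := mul_le_mul y2 y3 (by positivity) (by positivity)
            linarith
        _ = 1 / 5 * α ^ (24000000000000000 * (a + b) * 2 + 14) := by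
            rw [pow_add, ← pow_mul, mul_comm 2 (24000000000000000 * (a + b)), mul_comm (α ^ 14)]
        _ ≤ C * α ^ m := by
            gcongr
            linarith

def frc (n : ℕ) (f : ℕ → Bool) : Bool := Nat.rec (motive := fun _ => Bool) (f 0) (fun m _ => f (Nat.succ m)) n

theorem frc_eq (n : ℕ) (f : ℕ → Bool) : frc n f = f n := by
  cases n <;> rfl

def mulF (q a0 a1 b0 b1 : ℕ) (f : ℕ → ℕ → Bool) : Bool :=
  frc ((a0 * b0 + a1 * b1) % q) fun c0 => frc ((a0 * b1 + a1 * b0 + a1 * b1) % q) fun c1 => f c0 c1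

def mulT (q a0 a1 a2 b0 b1 b2 : ℕ) (f : ℕ → ℕ → ℕ → Bool) : Bool :=
  frc (a1 * b2 + a2 * b1) fun e3 => frc (a2 * b2) fun e4 =>
  frc ((a0 * b0 + e3 + e4) % q) fun c0 => frc ((a0 * b1 + a1 * b0 + e3 + 2 * e4) % q) fun c1 =>
  frc ((a0 * b2 + a1 * b1 + a2 * b0 + e3 + 2 * e4) % q) fun c2 => f c0 c1 c2

def powF (q : ℕ) : ℕ → ℕ → (ℕ → ℕ → Bool) → Bool
  | 0, e, f => cond (Nat.beq e 0) (f 1 0) false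
  | fuel + 1, e, f => frc (e / 2) fun e' => powF q fuel e' fun a0 a1 => mulF q a0 a1 a0 a1 fun b0 b1 =>
    cond (Nat.beq (e % 2) 1) (frc ((b0 + b1) % q) fun b => f b1 b) (f b0 b1)

def powT (q : ℕ) : ℕ → ℕ → (ℕ → ℕ → ℕ → Bool) → Bool
  | 0, e, f => cond (Nat.beq e 0) (f 1 0 0) false
  | fuel + 1, e, f => frc (e / 2) fun e' => powT q fuel e' fun a0 a1 a2 => mulT q a0 a1 a2 a0 a1 a2 fun b0 b1 b2 =>
    cond (Nat.beq (e % 2) 1) (frc ((b0 + b2) % q) fun x => frc ((b1 + b2) % q) fun y => f b2 x y) (f b0 b1 b2)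

def goF (q k s0 s1 : ℕ) : ℕ → ℕ → ℕ → ℕ → List (ℕ × ℕ) → (List (ℕ × ℕ) → Bool) → Bool
  | 0, _, _, _, acc, f => f acc
  | p + 1, n, c0, c1, acc, f => frc ((c1 + 5) % q) fun v => frc (n + k) fun n' =>
    mulF q s0 s1 c0 c1 fun d0 d1 => goF q k s0 s1 p n' d0 d1 ((n, v) :: acc) f

def goT (q k s0 s1 s2 : ℕ) : ℕ → ℕ → ℕ → ℕ → ℕ → List (ℕ × ℕ) → (List (ℕ × ℕ) → Bool) → Bool
  | 0, _, _, _, _, acc, f => f acc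
  | p + 1, n, c0, c1, c2, acc, f => frc ((c1 + c2) % q) fun v => frc (n + k) fun n' =>
    mulT q s0 s1 s2 c0 c1 c2 fun d0 d1 d2 => goT q k s0 s1 s2 p n' d0 d1 d2 ((n, v) :: acc) f

def join1 (n v : ℕ) : List (ℕ × ℕ) → List (ℕ × ℕ) → (List (ℕ × ℕ) → Bool) → Bool
  | [], acc, f => f acc
  | y :: tl, acc, f => cond (Nat.beq v y.2) (join1 n v tl ((n, y.1) :: acc) f) (join1 n v tl acc f)

def join2 (tl : List (ℕ × ℕ)) : List (ℕ × ℕ) → List (ℕ × ℕ) → (List (ℕ × ℕ) → Bool) → Bool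
  | [], acc, f => f acc
  | x :: fl, acc, f => join1 x.1 x.2 tl acc fun acc' => join2 tl fl acc' f

def stepC (p q k s0 s1 t0 t1 t2 : ℕ) : List (ℕ × ℕ) → List (ℕ × ℕ) → (List (ℕ × ℕ) → Bool) → Bool
  | [], acc, f => f acc
  | x :: cs, acc, f =>
    powF q 64 x.1 fun a0 a1 => goF q k s0 s1 p x.1 a0 a1 [] fun fl =>
    powT q 64 x.2 fun b0 b1 b2 => goT q k t0 t1 t2 p x.2 b0 b1 b2 [] fun tl =>
    join2 tl fl acc fun acc' => stepC p q k s0 s1 t0 t1 t2 cs acc' f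

def run (fin : ℕ → List (ℕ × ℕ) → Bool) : List (ℕ × ℕ) → ℕ → List (ℕ × ℕ) → Bool
  | [], k, cls => fin k cls
  | s :: st, k, cls => frc (k * s.1) fun k' =>
    powF s.2 64 k' fun x0 x1 => cond (Nat.beq (x0 % s.2) (1 % s.2) && Nat.beq (x1 % s.2) 0) 
    (powT s.2 64 k' fun y0 y1 y2 => cond (Nat.beq (y0 % s.2) (1 % s.2) && (Nat.beq (y1 % s.2) 0 && Nat.beq (y2 % s.2) 0)) 
    (powF s.2 64 k fun s0 s1 => powT s.2 64 k fun t0 t1 t2 =>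
    stepC s.1 s.2 k s0 s1 t0 t1 t2 cls [] fun cls' => run fin st k' cls') false) false

def stepData : List (ℕ × ℕ) :=
  [(2, 1), (2, 1), (3, 2), (2, 4), (2, 56), (7, 637), (5, 1189), (11, 2185733), (3, 3746971), (3, 824149), (2,
  12925712), (3, 1621), (3, 20006576371), (3, 104758314769), (5, 401), (2, 45619232), (2, 286784), (2,
  39502207), (2, 3024027904), (2, 1297613312), (2, 5562243440087041), (2, 1121143726081), (3, 4629918322261),
  (3, 328051), (3, 8727809481630721), (3, 8266861), (5, 7001), (2, 462422087680001), (2, 67584001), (2,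
  55738369), (2, 620085968896001), (5, 11251), (2, 5315022296186881), (2, 302776321), (2, 2645700318855169), (5,
  206251), (5, 437501), (5, 53393571562501), (5, 461425825781251), (5, 601562501)]

def solList : List (ℕ × ℕ) :=
  [(13, 7), (14, 14), (16, 15), (16, 23), (17, 9), (17, 25), (18, 12), (18, 24), (20, 10), (23, 9), (23, 25),
  (26, 26), (27, 7), (32, 30)]

def finCheck (k : ℕ) (cls : List (ℕ × ℕ)) : Bool :=
  Nat.beq k 4655895552000000000 && cls.all fun x => solList.any fun s =>
    Nat.beq ((x.1 + 20) % 2327947776000000000) s.1 && Nat.beq ((x.2 + 20) % 2327947776000000000) s.2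

theorem run_true : run finCheck stepData 1 [(0, 0)] = true := by decide +kernel

def PF (q e c0 c1 : ℕ) : Prop :=
  ∀ i, (Nat.fib (e + i) : ZMod q) = c0 * (Nat.fib i : ZMod q) + c1 * (Nat.fib (i + 1) : ZMod q)

def PT (q e c0 c1 c2 : ℕ) : Prop :=
  ∀ i, ((trib (e + i) : ℤ) : ZMod q) = c0 * ((trib i : ℤ) : ZMod q) + c1 * ((trib (i + 1) : ℤ) : ZMod q)
    + c2 * ((trib (i + 2) : ℤ) : ZMod q)

theorem fibZ (q i : ℕ) : (Nat.fib (i + 2) : ZMod q) = Nat.fib i + Nat.fib (i + 1) := by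
  rw [Nat.fib_add_two]; push_cast; rfl

theorem tribZ (q i : ℕ) : ((trib (i + 3) : ℤ) : ZMod q) = (trib (i + 2) : ℤ) + (trib (i + 1) : ℤ) + (trib i : ℤ) := by
  rw [trib]; push_cast; rfl

theorem mulF_s {q e g a0 a1 b0 b1 : ℕ} {f : ℕ → ℕ → Bool} (h1 : PF q e a0 a1) (h2 : PF q g b0 b1)
    (h : mulF q a0 a1 b0 b1 f = true) : ∃ c0 c1, PF q (e + g) c0 c1 ∧ f c0 c1 = true := by
  unfold mulF at h
  simp only [frc_eq] at h
  refine ⟨_, _, ?_, h⟩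
  intro i
  rw [add_assoc, h1, add_assoc, h2, h2, fibZ]
  simp only [ZMod.natCast_mod]
  push_cast
  ring

theorem mulT_s {q e g a0 a1 a2 b0 b1 b2 : ℕ} {f : ℕ → ℕ → ℕ → Bool} (h1 : PT q e a0 a1 a2) (h2 : PT q g b0 b1 b2)
    (h : mulT q a0 a1 a2 b0 b1 b2 f = true) : ∃ c0 c1 c2, PT q (e + g) c0 c1 c2 ∧ f c0 c1 c2 = true := by
  unfold mulT at h
  simp only [frc_eq] at h
  refine ⟨_, _, _, ?_, h⟩
  intro i
  rw [add_assoc, h1, add_assoc g i 1, add_assoc g i 2, h2, h2, h2, show i + 1 + 2 = i + 3 from rfl,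
    show i + 2 + 2 = (i + 1) + 3 from rfl, show i + 2 + 1 = i + 3 from rfl, show i + 1 + 1 = i + 2 from rfl,
    tribZ q (i + 1),
    show i + 1 + 2 = i + 3 from rfl, show i + 1 + 1 = i + 2 from rfl, tribZ q i]
  simp only [ZMod.natCast_mod]
  push_cast
  ring

theorem powF_s {q : ℕ} : ∀ (fuel e : ℕ) (f : ℕ → ℕ → Bool), powF q fuel e f = true →
    ∃ c0 c1, PF q e c0 c1 ∧ f c0 c1 = true := by
  intro fuel
  induction fuel with
  | zero =>
    intro e f h
    rw [powF] at h
    by_cases he : e = 0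
    · subst he
      exact ⟨1, 0, fun i => by simp, h⟩
    · have : Nat.beq e 0 = false := by
        rw [Bool.eq_false_iff]; intro hh; exact he (Nat.eq_of_beq_eq_true hh)
      rw [this] at h; simp at h
  | succ fuel ih =>
    intro e f h
    rw [powF, frc_eq] at h
    obtain ⟨a0, a1, ha, h⟩ := ih _ _ h
    obtain ⟨b0, b1, hb, h⟩ := mulF_s ha ha h
    cases hc : Nat.beq (e % 2) 1 with
    | true =>
      have := Nat.eq_of_beq_eq_true hc
      rw [hc] at h
      simp only [cond_true, frc_eq] at h
      refine ⟨_, _, ?_, h⟩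
      intro i
      rw [show e + i = e / 2 + e / 2 + (i + 1) by omega, hb, fibZ]
      simp only [ZMod.natCast_mod]
      push_cast
      ring
    | false =>
      have : e % 2 ≠ 1 := by
        intro h1; rw [h1] at hc; revert hc; decide
      rw [hc] at h
      simp only [cond_false] at h
      refine ⟨_, _, ?_, h⟩
      rwa [show e / 2 + e / 2 = e by omega] at hb

theorem powT_s {q : ℕ} : ∀ (fuel e : ℕ) (f : ℕ → ℕ → ℕ → Bool), powT q fuel e f = true →
    ∃ c0 c1 c2, PT q e c0 c1 c2 ∧ f c0 c1 c2 = true := by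
  intro fuel
  induction fuel with
  | zero =>
    intro e f h
    rw [powT] at h
    by_cases he : e = 0
    · subst he
      exact ⟨1, 0, 0, fun i => by simp, h⟩
    · have : Nat.beq e 0 = false := by
        rw [Bool.eq_false_iff]; intro hh; exact he (Nat.eq_of_beq_eq_true hh)
      rw [this] at h; simp at h
  | succ fuel ih =>
    intro e f h
    rw [powT, frc_eq] at h
    obtain ⟨a0, a1, a2, ha, h⟩ := ih _ _ h
    obtain ⟨b0, b1, b2, hb, h⟩ := mulT_s ha ha h
    cases hc : Nat.beq (e % 2) 1 with
    | true =>
      have := Nat.eq_of_beq_eq_true hc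
      rw [hc] at h
      simp only [cond_true, frc_eq] at h
      refine ⟨_, _, _, ?_, h⟩
      intro i
      rw [show e + i = e / 2 + e / 2 + (i + 1) by omega, hb, show i + 1 + 2 = i + 3 from rfl,
        show i + 1 + 1 = i + 2 from rfl, tribZ]
      simp only [ZMod.natCast_mod]
      push_cast
      ring
    | false =>
      have : e % 2 ≠ 1 := by
        intro h1; rw [h1] at hc; revert hc; decide
      rw [hc] at h
      simp only [cond_false] at h
      refine ⟨_, _, _, ?_, h⟩
      rwa [show e / 2 + e / 2 = e by omega] at hb

theorem goF_s {q k s0 s1 : ℕ} (hs : PF q k s0 s1) : ∀ (p n c0 c1 : ℕ) (acc : List (ℕ × ℕ))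
    (f : List (ℕ × ℕ) → Bool), PF q n c0 c1 → goF q k s0 s1 p n c0 c1 acc f = true →
    ∃ fl, (∀ y ∈ acc, y ∈ fl) ∧ (∀ a < p, ∃ v, (n + k * a, v) ∈ fl ∧ v % q = v ∧
      (v : ZMod q) = (Nat.fib (n + k * a) : ZMod q) + 5) ∧ f fl = true := by
  intro p
  induction p with
  | zero =>
    intro n c0 c1 acc f hc h
    exact ⟨acc, fun y hy => hy, fun a ha => absurd ha (Nat.not_lt_zero _), h⟩
  | succ p ih =>
    intro n c0 c1 acc f hc h
    rw [goF, frc_eq, frc_eq] at h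
    obtain ⟨d0, d1, hd, h⟩ := mulF_s hs hc h
    rw [add_comm k n] at hd
    obtain ⟨fl, h1, h2, h3⟩ := ih _ _ _ _ _ hd h
    refine ⟨fl, fun y hy => h1 y (List.mem_cons_of_mem _ hy), ?_, h3⟩
    intro a ha
    rcases a with _ | a
    · refine ⟨_, h1 _ List.mem_cons_self, Nat.mod_mod _ _, ?_⟩
      have := hc 0
      simp only [ZMod.natCast_mod]
      simp at this ⊢
      rw [this]
    · obtain ⟨v, hv⟩ := h2 a (by omega)
      refine ⟨v, ?_⟩
      rwa [show n + k * (a + 1) = n + k + k * a by ring]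

theorem goT_s {q k s0 s1 s2 : ℕ} (hs : PT q k s0 s1 s2) : ∀ (p n c0 c1 c2 : ℕ) (acc : List (ℕ × ℕ))
    (f : List (ℕ × ℕ) → Bool), PT q n c0 c1 c2 → goT q k s0 s1 s2 p n c0 c1 c2 acc f = true →
    ∃ fl, (∀ y ∈ acc, y ∈ fl) ∧ (∀ a < p, ∃ v, (n + k * a, v) ∈ fl ∧ v % q = v ∧
      (v : ZMod q) = ((trib (n + k * a) : ℤ) : ZMod q)) ∧ f fl = true := by
  intro p
  induction p with
  | zero =>
    intro n c0 c1 c2 acc f hc h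
    exact ⟨acc, fun y hy => hy, fun a ha => absurd ha (Nat.not_lt_zero _), h⟩
  | succ p ih =>
    intro n c0 c1 c2 acc f hc h
    rw [goT, frc_eq, frc_eq] at h
    obtain ⟨d0, d1, d2, hd, h⟩ := mulT_s hs hc h
    rw [add_comm k n] at hd
    obtain ⟨fl, h1, h2, h3⟩ := ih _ _ _ _ _ _ hd h
    refine ⟨fl, fun y hy => h1 y (List.mem_cons_of_mem _ hy), ?_, h3⟩
    intro a ha
    rcases a with _ | a
    · refine ⟨_, h1 _ List.mem_cons_self, Nat.mod_mod _ _, ?_⟩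
      have := hc 0
      simp only [ZMod.natCast_mod]
      simp [trib] at this ⊢
      rw [this]
    · obtain ⟨v, hv⟩ := h2 a (by omega)
      refine ⟨v, ?_⟩
      rwa [show n + k * (a + 1) = n + k + k * a by ring]

theorem join1_s (n v : ℕ) : ∀ (tl acc : List (ℕ × ℕ)) (f : List (ℕ × ℕ) → Bool),
    join1 n v tl acc f = true → ∃ acc', (∀ y ∈ acc, y ∈ acc') ∧ (∀ m, (m, v) ∈ tl → (n, m) ∈ acc') ∧
      f acc' = true := by
  intro tl
  induction tl with
  | nil =>
    intro acc f h
    exact ⟨acc, fun y hy => hy, fun m hm => by simp at hm, h⟩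
  | cons y tl ih =>
    intro acc f h
    rw [join1] at h
    cases hc : Nat.beq v y.2 with
    | true =>
      rw [hc] at h
      obtain ⟨acc', h1, h2, h3⟩ := ih _ _ h
      refine ⟨acc', fun z hz => h1 z (List.mem_cons_of_mem _ hz), ?_, h3⟩
      intro m hm
      rcases List.mem_cons.1 hm with hm | hm
      · have : y.1 = m := by rw [← hm]
        rw [← this]
        exact h1 _ List.mem_cons_self
      · exact h2 m hm
    | false =>
      rw [hc] at h
      obtain ⟨acc', h1, h2, h3⟩ := ih _ _ h
      refine ⟨acc', h1, ?_, h3⟩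
      intro m hm
      rcases List.mem_cons.1 hm with hm | hm
      · rw [← hm] at hc
        simp at hc
      · exact h2 m hm

theorem join2_s (tl : List (ℕ × ℕ)) : ∀ (fl acc : List (ℕ × ℕ)) (f : List (ℕ × ℕ) → Bool),
    join2 tl fl acc f = true → ∃ acc', (∀ y ∈ acc, y ∈ acc') ∧
      (∀ n m v, (n, v) ∈ fl → (m, v) ∈ tl → (n, m) ∈ acc') ∧ f acc' = true := by
  intro fl
  induction fl with
  | nil =>
    intro acc f h
    exact ⟨acc, fun y hy => hy, fun n m v hm => by simp at hm, h⟩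
  | cons x fl ih =>
    intro acc f h
    rw [join2] at h
    obtain ⟨acc1, h1, h2, h⟩ := join1_s _ _ _ _ _ h
    obtain ⟨acc2, h3, h4, h⟩ := ih _ _ h
    refine ⟨acc2, fun y hy => h3 y (h1 y hy), ?_, h⟩
    intro n m v hn hm
    rcases List.mem_cons.1 hn with hn | hn
    · subst hn
      exact h3 _ (h2 m hm)
    · exact h4 n m v hn hm

theorem stepC_s {p q k s0 s1 t0 t1 t2 : ℕ} (hs : PF q k s0 s1) (ht : PT q k t0 t1 t2) :
    ∀ (cs acc : List (ℕ × ℕ)) (f : List (ℕ × ℕ) → Bool),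
    stepC p q k s0 s1 t0 t1 t2 cs acc f = true → ∃ acc', (∀ y ∈ acc, y ∈ acc') ∧
      (∀ n m a b, (n, m) ∈ cs → a < p → b < p →
        (Nat.fib (n + k * a) : ZMod q) + 5 = ((trib (m + k * b) : ℤ) : ZMod q) →
        (n + k * a, m + k * b) ∈ acc') ∧ f acc' = true := by
  intro cs
  induction cs with
  | nil =>
    intro acc f h
    exact ⟨acc, fun y hy => hy, fun n m a b hm => by simp at hm, h⟩
  | cons x cs ih =>
    intro acc f h
    rw [stepC] at h
    obtain ⟨a0, a1, ha, h⟩ := powF_s _ _ _ h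
    obtain ⟨fl, -, hfl, h⟩ := goF_s hs _ _ _ _ _ _ ha h
    obtain ⟨b0, b1, b2, hb, h⟩ := powT_s _ _ _ h
    obtain ⟨tl, -, htl, h⟩ := goT_s ht _ _ _ _ _ _ _ hb h
    obtain ⟨acc1, h1, h2, h⟩ := join2_s _ _ _ _ h
    obtain ⟨acc2, h3, h4, h⟩ := ih _ _ h
    refine ⟨acc2, fun y hy => h3 y (h1 y hy), ?_, h⟩
    intro n m a b hn ha' hb' he
    rcases List.mem_cons.1 hn with hn | hn
    · subst hn
      obtain ⟨v, hv1, hv2, hv3⟩ := hfl a ha'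
      obtain ⟨w, hw1, hw2, hw3⟩ := htl b hb'
      have : v = w := by
        rw [← hv3, ← hw3, ZMod.natCast_eq_natCast_iff'] at he
        rw [← hv2, ← hw2, he]
      subst this
      exact h3 _ (h2 _ _ v hv1 hw1)
    · exact h4 n m a b hn ha' hb' he

def SInv (k : ℕ) (cls : List (ℕ × ℕ)) : Prop :=
  ∀ n m : ℕ, (Nat.fib n : ℤ) + 5 = trib m → (n % k, m % k) ∈ cls

theorem per_mod {R : Type*} (u : ℕ → R) (k : ℕ) (h : ∀ i, u (k + i) = u i) (n : ℕ) : u (n % k) = u n := by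
  have : ∀ j r, u (k * j + r) = u r := by
    intro j
    induction j with
    | zero => intro r; simp
    | succ j ih => intro r; rw [show k * (j + 1) + r = k + (k * j + r) by ring, h, ih]
  conv_rhs => rw [← Nat.div_add_mod n k]
  rw [this]

theorem cast_of_beq {q x c : ℕ} (h : Nat.beq (x % q) (c % q) = true) : (x : ZMod q) = (c : ZMod q) :=
  (ZMod.natCast_eq_natCast_iff' _ _ _).2 (Nat.eq_of_beq_eq_true h)

theorem run_s (fin : ℕ → List (ℕ × ℕ) → Bool) : ∀ (st : List (ℕ × ℕ)) (k : ℕ) (cls : List (ℕ × ℕ)),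
    (∀ s ∈ st, 0 < s.1) → SInv k cls → run fin st k cls = true →
    ∃ k' cls', SInv k' cls' ∧ fin k' cls' = true := by
  intro st
  induction st with
  | nil =>
    intro k cls _ hI h
    exact ⟨k, cls, hI, h⟩
  | cons s st ih =>
    intro k cls hp hI h
    obtain ⟨p, q⟩ := s
    rw [run, frc_eq] at h
    simp only at h
    obtain ⟨x0, x1, hx, h⟩ := powF_s _ _ _ h
    rw [Bool.cond_eq_ite] at h
    split_ifs at h with hc1
    obtain ⟨y0, y1, y2, hy, h⟩ := powT_s _ _ _ h
    rw [Bool.cond_eq_ite] at h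
    split_ifs at h with hc2
    obtain ⟨s0, s1, hs, h⟩ := powF_s _ _ _ h
    obtain ⟨t0, t1, t2, ht, h⟩ := powT_s _ _ _ h
    obtain ⟨cls', -, h2, h⟩ := stepC_s hs ht _ _ _ h
    rw [Bool.and_eq_true] at hc1
    rw [Bool.and_eq_true, Bool.and_eq_true] at hc2
    have z : ∀ {x : ℕ}, Nat.beq (x % q) 0 = true → (x : ZMod q) = 0 := by
      intro x hx
      have := cast_of_beq (q := q) (x := x) (c := 0) (by rwa [Nat.zero_mod])
      simpa using this
    have e0 := cast_of_beq hc1.1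
    have e1 := z hc1.2
    have f0 := cast_of_beq hc2.1
    have f1 := z hc2.2.1
    have f2 := z hc2.2.2
    have PFm := per_mod (fun n => (Nat.fib n : ZMod q)) (k * p) (fun i => by
      have := hx i
      rw [e0, e1] at this
      simpa using this)
    have PTm := per_mod (fun n => ((trib n : ℤ) : ZMod q)) (k * p) (fun i => by
      have := hy i
      rw [f0, f1, f2] at this
      simpa using this)
    have hp0 : 0 < p := hp (p, q) List.mem_cons_self
    refine ih (k * p) cls' (fun s hs => hp s (List.mem_cons_of_mem _ hs)) ?_ h
    intro n m hnm
    have hn : n % (k * p) = n % k + k * (n / k % p) := Nat.mod_mul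
    have hm : m % (k * p) = m % k + k * (m / k % p) := Nat.mod_mul
    rw [hn, hm]
    apply h2 _ _ _ _ (hI n m hnm) (Nat.mod_lt _ hp0) (Nat.mod_lt _ hp0)
    rw [← hn, ← hm]
    have a1 := PFm n
    have a2 := PTm m
    rw [a1, a2, ← hnm]
    push_cast
    rfl

theorem classes (n m : ℕ) (h : (Nat.fib n : ℤ) + 5 = trib m) (k : ℕ) (hk : k = 2327947776000000000) :
    ∃ s ∈ solList, (n + 20) % k = s.1 ∧ (m + 20) % k = s.2 := by
  obtain ⟨k', cls', hI, hf⟩ := run_s finCheck stepData 1 [(0, 0)] (by decide)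
    (by intro n m _; simp [Nat.mod_one]) run_true
  unfold finCheck at hf
  rw [Bool.and_eq_true, List.all_eq_true] at hf
  obtain ⟨hk', hf⟩ := hf
  have hk' := Nat.eq_of_beq_eq_true hk'
  have := hf _ (hI n m h)
  rw [List.any_eq_true] at this
  obtain ⟨s, hs, hh⟩ := this
  rw [Bool.and_eq_true] at hh
  have h1 := Nat.eq_of_beq_eq_true hh.1
  have h2 := Nat.eq_of_beq_eq_true hh.2
  simp only at h1 h2
  refine ⟨s, hs, ?_, ?_⟩
  · rw [← h1, hk, hk']; omega
  · rw [← h2, hk, hk']; omega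

theorem trib_lb (m : ℕ) : (0 : ℤ) ≤ trib m ∧ (m : ℤ) ≤ trib (m + 1) + 1 ∧ (m : ℤ) ≤ trib (m + 2) := by
  induction m using Nat.strong_induction_on with
  | _ m ih =>
    rcases m with _ | _ | _ | _ | m
    · simp [trib]
    · simp [trib]
    · simp [trib]
    · simp [trib]
    · have a1 := ih m (by omega)
      have a2 := ih (m + 1) (by omega)
      have a3 := ih (m + 2) (by omega)
      have a4 := ih (m + 3) (by omega)
      have e1 : trib (m + 6) = trib (m + 5) + trib (m + 4) + trib (m + 3) := by rw [trib]
      have e2 : trib (m + 5) = trib (m + 4) + trib (m + 3) + trib (m + 2) := by rw [trib]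
      have e3 : trib (m + 4) = trib (m + 3) + trib (m + 2) + trib (m + 1) := by rw [trib]
      have e4 : trib (m + 3) = trib (m + 2) + trib (m + 1) + trib m := by rw [trib]
      simp only [add_assoc] at *
      norm_num at *
      refine ⟨?_, ?_, ?_⟩ <;> omega

theorem fib_sub_trib_eq_neg_five :
    {p : ℕ × ℕ | 2 ≤ p.1 ∧ 2 ≤ p.2 ∧ (Nat.fib p.1 : ℤ) - trib p.2 = -5} =
      ({(3, 5), (6, 6), (12, 10)} : Set (ℕ × ℕ)) := by
  ext ⟨n, m⟩
  simp only [Set.mem_ofPred_eq, Set.mem_insert_iff, Set.mem_singleton_iff, Prod.mk.injEq]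
  constructor
  · rintro ⟨hn, hm, h⟩
    have h : (Nat.fib n : ℤ) + 5 = trib m := by linarith
    obtain ⟨k, hk⟩ : ∃ k : ℕ, k = 2327947776000000000 := ⟨_, rfl⟩
    obtain ⟨s, hs, h1, h2⟩ := classes n m h k hk
    have hb : 7 ≤ s.1 ∧ s.1 ≤ 32 ∧ 7 ≤ s.2 ∧ s.2 ≤ 33 ∧ 8 ≤ s.1 := by
      have hall : ∀ s ∈ solList, 7 ≤ s.1 ∧ s.1 ≤ 32 ∧ 7 ≤ s.2 ∧ s.2 ≤ 33 ∧ 8 ≤ s.1 := by decide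
      exact hall s hs
    have hn' := Nat.div_add_mod (n + 20) k
    have hm' := Nat.div_add_mod (m + 20) k
    rw [h1] at hn'
    rw [h2] at hm'
    obtain ⟨a, ha⟩ : ∃ a, a = (n + 20) / k := ⟨_, rfl⟩
    obtain ⟨b, hb'⟩ : ∃ b, b = (m + 20) / k := ⟨_, rfl⟩
    rw [← ha] at hn'
    rw [← hb'] at hm'
    rcases Nat.eq_zero_or_pos a with ha0 | ha0
    · rw [ha0, Nat.mul_zero] at hn'
      have hn12 : n ≤ 12 := by omega
      have hf : Nat.fib n ≤ 144 := (Nat.fib_mono hn12).trans (by decide)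
      have hm2 : m < 200 := by
        obtain ⟨j, rfl⟩ : ∃ j, m = j + 2 := ⟨m - 2, by omega⟩
        have := (trib_lb j).2.2
        omega
      have hb0 : b = 0 := by
        by_contra hne
        have : k * 1 ≤ k * b := Nat.mul_le_mul_left _ (Nat.pos_of_ne_zero hne)
        omega
      rw [hb0, Nat.mul_zero] at hm'
      have hh : (s.1, s.2) ∈ solList := hs
      rw [show s.1 = n + 20 by omega, show s.2 = m + 20 by omega] at hh
      simp only [solList, List.mem_cons, Prod.mk.injEq, List.not_mem_nil, or_false] at hh
      clear * - hh h hn hm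
      have hx : (n = 3 ∧ m = 5) ∨ (n = 6 ∧ m = 6) ∨ (n = 12 ∧ m = 10) ∨ (n=3 ∧ m = 5) := by omega
      omega
    · rcases Nat.eq_zero_or_pos b with hb0 | hb0
      · exfalso
        rw [hb0, Nat.mul_zero] at hm'
        have hm13 : m ≤ 13 := by omega
        have ht : trib m ≤ 2000 := by
          clear * - hm13
          interval_cases m <;> decide
        have : k * 1 ≤ k * a := Nat.mul_le_mul_left _ ha0
        have hf : n ≤ Nat.fib n := Nat.le_fib_self (by omega)
        omega
      · exfalso
        refine noLarge k hk n m a b (s.1 - 20) (s.2 - 20) ?_ ?_ ha0 hb0 ?_ ?_ h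
        · omega
        · omega
        · have : ((k * a + s.1 : ℕ) : ℤ) = ((n + 20 : ℕ) : ℤ) := by rw [hn']
          push_cast at this ⊢
          linarith
        · have : ((k * b + s.2 : ℕ) : ℤ) = ((m + 20 : ℕ) : ℤ) := by rw [hm']
          push_cast at this ⊢
          linarith
  · rintro (⟨rfl, rfl⟩ | ⟨rfl, rfl⟩ | ⟨rfl, rfl⟩) <;> decide
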